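/- arXiv:2503.18920 — 3 statements merged into one kernel-verified Lean document; each statement's English description precedes it below -/
import Mathlib

section
/- A surjective function f : V(C_n) → {1,...,k} is a k-color weak maximizer of the Wiener index W on C_n if and only if for every i ∈ {1,...,k} the color class f⁻¹(i) is a maximizer of W on C_n. -/
open SimpleGraph Finset

/-- The cycle graph on vertex set `ZMod n`, with an edge between `i` and `i+1` (mod `n`). -/
def cycleGraphZMod (n : ℕ) : SimpleGraph (ZMod n) :=
  SimpleGraph.fromRel (fun u v => v = u + 1)

/-- The Wiener index of a set of vertices: the sum of all pairwise geodesic distances. -/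
noncomputable def wienerSet {V : Type*} [Fintype V] [DecidableEq V]
    (G : SimpleGraph V) (A : Finset V) : ℕ :=
  (∑ p ∈ A.offDiag, G.dist p.1 p.2) / 2

/-- `A` is a maximizer of `W` on `G`. -/
def IsWienerMaximizer {V : Type*} [Fintype V] [DecidableEq V]
    (G : SimpleGraph V) (A : Finset V) : Prop :=
  ∀ B : Finset V, B.card = A.card → wienerSet G B ≤ wienerSet G A

/-- `A ⊆ V(C_n)` is almost good. -/
def AlmostGood (n : ℕ) (A : Finset (ZMod n)) : Prop :=
  A.card = 1 ∨ A.card = n - 1 ∨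
    ∃ c₁ c₂ : ((cycleGraphZMod n).induce (↑A : Set (ZMod n))).ConnectedComponent,
      c₁ ≠ c₂ ∧ (∀ c, c = c₁ ∨ c = c₂) ∧
      (c₁.supp.ncard : ℤ) - (c₂.supp.ncard : ℤ) ≤ 1 ∧
      (c₂.supp.ncard : ℤ) - (c₁.supp.ncard : ℤ) ≤ 1

/-- `A ⊆ V(C_n)` is good: both `A` and its complement are almost good. -/
def GoodSet (n : ℕ) [NeZero n] (A : Finset (ZMod n)) : Prop :=
  AlmostGood n A ∧ AlmostGood n (Finset.univ \ A)

/-- The color class of color `i` for the coloring `f`. -/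
def colorClass {V : Type*} [Fintype V] {k : ℕ} (f : V → Fin k) (i : Fin k) : Finset V :=
  Finset.univ.filter (fun v => f v = i)

/-- The Wiener index of a coloring: the sum of the Wiener indices of its color classes. -/
noncomputable def wienerColoring {V : Type*} [Fintype V] [DecidableEq V] {k : ℕ}
    (G : SimpleGraph V) (f : V → Fin k) : ℕ :=
  ∑ i : Fin k, wienerSet G (colorClass f i)

/-- The type of a coloring, as the multiset of cardinalities of its color classes
(equality of multisets is equality of the nondecreasing rearrangements). -/
def colorType {V : Type*} [Fintype V] {k : ℕ} (f : V → Fin k) : Multiset ℕ :=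
  (Finset.univ : Finset (Fin k)).val.map (fun i => (colorClass f i).card)

/-- `f` is a `k`-color weak maximizer of `W` on `G`. -/
def IsWeakMaximizer {V : Type*} [Fintype V] [DecidableEq V] {k : ℕ}
    (G : SimpleGraph V) (f : V → Fin k) : Prop :=
  Function.Surjective f ∧ ∀ g : V → Fin k, Function.Surjective g →
    colorType g = colorType f → wienerColoring G g ≤ wienerColoring G f

/-- The coloring obtained from `f` by swapping the colors of `u` and `v`. -/
def swapColors {V α : Type*} [DecidableEq V] (f : V → α) (u v : V) : V → α :=
  f ∘ Equiv.swap u v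

/-- `f` is a `k`-color local weak maximizer of `W` on `G`. -/
def IsLocalWeakMaximizer {V : Type*} [Fintype V] [DecidableEq V] {k : ℕ}
    (G : SimpleGraph V) (f : V → Fin k) : Prop :=
  Function.Surjective f ∧ ∀ u v : V, G.Adj u v →
    wienerColoring G (swapColors f u v) ≤ wienerColoring G f

/-- The number of vertices to the left of `u` in the path that get the same color as `u`. -/
def leftCount {n k : ℕ} (f : Fin n → Fin k) (u : Fin n) : ℕ :=
  (Finset.univ.filter (fun w => w < u ∧ f w = f u)).card

/-- The number of vertices to the right of `u` in the path that get the same color as `u`. -/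
def rightCount {n k : ℕ} (f : Fin n → Fin k) (u : Fin n) : ℕ :=
  (Finset.univ.filter (fun w => u < w ∧ f w = f u)).card

/-- The sum of the `j` largest entries of a multiset of naturals. -/
def sumLargest (s : Multiset ℕ) (j : ℕ) : ℕ :=
  (((s.sort (· ≤ ·)).reverse).take j).sum

/-- `x ≺ y` : `x` is majorized by `y`. -/
def MajorizedBy (x y : Multiset ℕ) : Prop :=
  x.card = y.card ∧ x.sum = y.sum ∧ ∀ j, sumLargest x j ≤ sumLargest y j

/-- The reverse Robin Hood transfer `R_{j,j'}` applied to the (sorted) list `t`,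
with `j ≤ j'` zero-indexed: subtract `1` from the `j`-th entry and add `1` to the `j'`-th
entry; the result is recorded as a multiset (i.e. up to rearrangement). -/
def rhTransfer (t : List ℕ) (j j' : ℕ) : Multiset ℕ :=
  ↑((t.set j (t.getD j 0 - 1)).set j' ((t.set j (t.getD j 0 - 1)).getD j' 0 + 1))

/-- `t(n,k)` : the unique nondecreasing `k`-tuple of positive integers summing to `n`
whose entries pairwise differ by at most one, as a multiset. -/
def equitableType (n k : ℕ) : Multiset ℕ :=
  Multiset.replicate (k - n % k) (n / k) + Multiset.replicate (n % k) (n / k + 1)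

/-- One step of the operation `R`: `s ∈ R({t})`, i.e. `s = t` or `s` is obtained from `t` by
a reverse Robin Hood transfer between two entries that are equal and even. -/
def REstep (t s : Multiset ℕ) : Prop :=
  s = t ∨ ∃ m : ℕ, Even m ∧ 2 ≤ t.count m ∧
    s = (t - Multiset.replicate 2 m) + {m - 1, m + 1}

/-- `s ∈ R^∞({t(n,k)})`. -/
def InRInfty (n k : ℕ) (s : Multiset ℕ) : Prop :=
  Relation.ReflTransGen REstep (equitableType n k) s

section CycleDistance

variable {n : ℕ}

lemma exists_walk_add_natCast (u : ZMod n) (m : ℕ) :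
    ∃ p : (cycleGraphZMod n).Walk u (u + m), p.length ≤ m := by
  induction m with
  | zero => exact ⟨SimpleGraph.Walk.nil.copy rfl (by simp), by simp⟩
  | succ m ih =>
    obtain ⟨p, hp⟩ := ih
    have e : u + (m : ZMod n) + 1 = u + ((m + 1 : ℕ) : ZMod n) := by push_cast; ring
    by_cases h : u + (m : ZMod n) = u + (m : ZMod n) + 1
    · exact ⟨p.copy rfl (h.trans e), by simp; omega⟩
    · have hadj : (cycleGraphZMod n).Adj (u + (m : ZMod n)) (u + (m : ZMod n) + 1) := by
        simp only [cycleGraphZMod, SimpleGraph.fromRel_adj]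
        exact ⟨h, Or.inl trivial⟩
      exact ⟨(p.concat hadj).copy rfl e, by simp [hp]⟩

variable [NeZero n]

lemma ZMod.val_add_cases (a b : ZMod n) :
    (a.val + b.val < n ∧ (a + b).val = a.val + b.val) ∨
      (n ≤ a.val + b.val ∧ (a + b).val + n = a.val + b.val) := by
  rcases lt_or_ge (a.val + b.val) n with h | h
  · exact Or.inl ⟨h, ZMod.val_add_of_lt h⟩
  · exact Or.inr ⟨h, (ZMod.val_add_val_of_le h).symm⟩

lemma ZMod.natAbs_valMinAbs_one_le : (1 : ZMod n).valMinAbs.natAbs ≤ 1 := by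
  rw [ZMod.valMinAbs_natAbs_eq_min]
  have : (1 : ZMod n).val ≤ 1 := by
    rw [← Nat.cast_one, ZMod.val_natCast]
    exact Nat.mod_le _ _
  omega

lemma natAbs_valMinAbs_sub_le_of_adj {u v : ZMod n} (h : (cycleGraphZMod n).Adj u v) :
    (v - u).valMinAbs.natAbs ≤ 1 := by
  simp only [cycleGraphZMod, SimpleGraph.fromRel_adj] at h
  obtain ⟨-, rfl | rfl⟩ := h
  · simpa using ZMod.natAbs_valMinAbs_one_le
  · rw [← ZMod.natAbs_valMinAbs_neg]
    simpa using ZMod.natAbs_valMinAbs_one_le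

lemma natAbs_valMinAbs_sub_le_length {u v : ZMod n} (p : (cycleGraphZMod n).Walk u v) :
    (v - u).valMinAbs.natAbs ≤ p.length := by
  induction p with
  | nil => simp
  | @cons a b c hab q ih =>
    have h₁ := natAbs_valMinAbs_sub_le_of_adj hab
    have h₂ := ZMod.natAbs_valMinAbs_add_le (c - b) (b - a)
    rw [sub_add_sub_cancel] at h₂
    rw [SimpleGraph.Walk.length_cons]
    omega

lemma cycleGraphZMod_connected : (cycleGraphZMod n).Connected := by
  rw [SimpleGraph.connected_iff]
  refine ⟨fun u v => ?_, ⟨0⟩⟩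
  obtain ⟨p, -⟩ := exists_walk_add_natCast u (v - u).val
  exact ⟨p.copy rfl (by simp)⟩

lemma cycleGraphZMod_dist_le_val_sub (u v : ZMod n) :
    (cycleGraphZMod n).dist u v ≤ (v - u).val := by
  obtain ⟨p, hp⟩ := exists_walk_add_natCast u (v - u).val
  have := SimpleGraph.dist_le p
  simp only [ZMod.natCast_val, ZMod.cast_id', id_eq, add_sub_cancel] at this
  exact this.trans hp

lemma cycleGraphZMod_dist_eq (u v : ZMod n) :
    (cycleGraphZMod n).dist u v = min (v - u).val (n - (v - u).val) := by
  apply le_antisymm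
  · refine le_min (cycleGraphZMod_dist_le_val_sub u v) ?_
    by_cases h : v - u = 0
    · rw [sub_eq_zero.mp h]
      simp
    · rw [SimpleGraph.dist_comm]
      refine (cycleGraphZMod_dist_le_val_sub v u).trans ?_
      rw [← neg_sub v u, ZMod.neg_val, if_neg h]
  · obtain ⟨p, hp⟩ := cycleGraphZMod_connected.exists_walk_length_eq_dist u v
    rw [← hp, ← ZMod.valMinAbs_natAbs_eq_min]
    exact natAbs_valMinAbs_sub_le_length p

lemma card_filter_val_lt_half_le_val_add (w : ZMod n) :
    #{j : ZMod n | j.val < n / 2 ∧ ¬ (j + w).val < n / 2} = min w.val (n - w.val) := by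
  have hw := ZMod.val_lt w
  rw [← card_image_of_injective _ (ZMod.val_injective n)]
  have key : ∀ x < n / 2, ∃ j : ZMod n, j.val = x := fun x hx =>
    ⟨(x : ZMod n), ZMod.val_cast_of_lt (by omega)⟩
  rcases le_or_gt w.val (n / 2) with h | h
  · have : image ZMod.val {j : ZMod n | j.val < n / 2 ∧ ¬ (j + w).val < n / 2} =
        Ico (n / 2 - w.val) (n / 2) := by
      ext x
      simp only [mem_image, mem_filter_univ, mem_Ico]
      constructor
      · rintro ⟨j, hj, rfl⟩
        have := ZMod.val_add_cases j w
        omega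
      · intro hx
        obtain ⟨j, rfl⟩ := key x (by omega)
        refine ⟨j, ?_, rfl⟩
        have := ZMod.val_add_cases j w
        omega
    rw [this, Nat.card_Ico]
    omega
  · have : image ZMod.val {j : ZMod n | j.val < n / 2 ∧ ¬ (j + w).val < n / 2} =
        range (n - w.val) := by
      ext x
      simp only [mem_image, mem_filter_univ, mem_range]
      constructor
      · rintro ⟨j, hj, rfl⟩
        have := ZMod.val_add_cases j w
        have := ZMod.val_lt j
        omega
      · intro hx
        obtain ⟨j, rfl⟩ := key x (by omega)
        refine ⟨j, ?_, rfl⟩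
        have := ZMod.val_add_cases j w
        omega
    rw [this, card_range]
    omega

/-- The distance counts the half arcs that contain `u` but not `v`. -/
lemma cycleGraphZMod_dist_eq_card (u v : ZMod n) :
    (cycleGraphZMod n).dist u v =
      #{i : ZMod n | (u - i).val < n / 2 ∧ ¬ (v - i).val < n / 2} := by
  rw [cycleGraphZMod_dist_eq, ← card_filter_val_lt_half_le_val_add]
  refine card_bij (fun j _ => u - j) ?_ ?_ ?_
  · intro j hj
    simp only [mem_filter_univ] at hj ⊢
    rwa [sub_sub_cancel, show v - (u - j) = j + (v - u) by ring]
  · intro a _ b _ hab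
    exact sub_right_injective hab
  · intro i hi
    refine ⟨u - i, ?_, sub_sub_cancel _ _⟩
    simp only [mem_filter_univ] at hi ⊢
    rwa [show u - i + (v - u) = v - i by ring]

end CycleDistance

section Arcs

variable {n : ℕ} [NeZero n]

/-- The number of elements of `A` in the arc of `n / 2` consecutive vertices starting at `i`. -/
def arcCount (A : Finset (ZMod n)) (i : ZMod n) : ℕ :=
  #{u ∈ A | (u - i).val < n / 2}

lemma sum_offDiag_dist_eq (A : Finset (ZMod n)) :
    ∑ p ∈ A.offDiag, (cycleGraphZMod n).dist p.1 p.2 =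
      ∑ i, arcCount A i * (#A - arcCount A i) := by
  have h₁ : ∑ p ∈ A.offDiag, (cycleGraphZMod n).dist p.1 p.2 =
      ∑ p ∈ A ×ˢ A, (cycleGraphZMod n).dist p.1 p.2 := by
    refine sum_subset (fun p hp => ?_) (fun p hp hp' => ?_)
    · rw [mem_offDiag] at hp
      exact mem_product.mpr ⟨hp.1, hp.2.1⟩
    · rw [mem_product] at hp
      have : p.1 = p.2 := by
        by_contra h
        exact hp' (mem_offDiag.mpr ⟨hp.1, hp.2, h⟩)
      rw [this, SimpleGraph.dist_self]
  rw [h₁]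
  simp_rw [cycleGraphZMod_dist_eq_card, card_filter]
  rw [sum_comm]
  refine sum_congr rfl fun i _ => ?_
  have h₂ : #A - arcCount A i = #{v ∈ A | ¬ (v - i).val < n / 2} := by
    rw [arcCount, ← card_filter_add_card_filter_not (s := A) (fun u => (u - i).val < n / 2)]
    simp
  rw [h₂, arcCount, ← card_product, ← filter_product, card_filter]

lemma sum_arcCount (A : Finset (ZMod n)) :
    ∑ i, arcCount A i = #A * #{j : ZMod n | j.val < n / 2} := by
  simp_rw [arcCount, card_filter]
  rw [sum_comm, ← smul_eq_mul, ← sum_const]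
  refine sum_congr rfl fun u _ => ?_
  exact (Equiv.subLeft u).sum_comp fun j : ZMod n => if j.val < n / 2 then 1 else 0

lemma isWienerMaximizer_of_arcCount {A : Finset (ZMod n)} (c : ℕ)
    (h : ∀ i, arcCount A i = c ∨ arcCount A i = c + 1) :
    IsWienerMaximizer (cycleGraphZMod n) A := by
  intro B hB
  refine Nat.div_le_div_right ?_
  rw [sum_offDiag_dist_eq, sum_offDiag_dist_eq, hB]
  have hsum : ∑ i, (arcCount A i : ℤ) = ∑ i, (arcCount B i : ℤ) := by
    exact_mod_cast (sum_arcCount A).trans (hB ▸ (sum_arcCount B).symm)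
  zify
  have cast_sub : ∀ (C : Finset (ZMod n)), #C = #A → ∀ i,
      ((#A - arcCount C i : ℕ) : ℤ) = #A - arcCount C i := fun C hC i =>
    Nat.cast_sub (hC ▸ card_filter_le C _)
  simp_rw [cast_sub A rfl, cast_sub B hB]
  have expand : ∀ a : ℤ, a * (#A - a) = (#A - 2 * c - 1) * a + c * (c + 1)
      - (a - c) * (a - c - 1) := fun a => by ring
  simp_rw [expand, sum_sub_distrib, sum_add_distrib, ← mul_sum]
  rw [hsum]
  refine sub_le_sub_left ?_ _
  refine sum_le_sum fun i _ => ?_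
  have hA : ((arcCount A i : ℤ) - c) * (arcCount A i - c - 1) = 0 := by
    rcases h i with h | h <;> rw [h] <;> push_cast <;> ring
  rw [hA]
  rcases le_or_gt (arcCount B i) c with h | h
  · exact mul_nonneg_of_nonpos_of_nonpos (by omega) (by omega)
  · exact mul_nonneg (by omega) (by omega)

lemma arcCount_add_one_le (A : Finset (ZMod n)) (i : ZMod n) :
    arcCount A (i + 1) ≤
      arcCount A i + if i + (n / 2 : ℕ) ∈ A ∧ i ∉ A then 1 else 0 := by
  have hn := NeZero.pos n
  rcases Nat.eq_zero_or_pos (n / 2) with h0 | h0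
  · simp [arcCount, h0]
  have hi : ∀ u, (u - (i + 1)).val < n / 2 → u ≠ i ∧
      (u = i + (n / 2 : ℕ) ∨ (u - i).val < n / 2) := by
    intro u hu
    have h1 : (1 : ZMod n).val = 1 := by
      rw [← Nat.cast_one]
      exact ZMod.val_cast_of_lt (by omega)
    have := ZMod.val_add_cases (u - (i + 1)) 1
    rw [show u - (i + 1) + 1 = u - i by ring, h1] at this
    refine ⟨?_, ?_⟩
    · rintro rfl
      simp only [sub_self, ZMod.val_zero] at this
      omega
    · by_cases h : (u - i).val < n / 2
      · exact Or.inr h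
      · left
        have : (u - i).val = n / 2 := by omega
        rw [← this]
        simp
  set S := {u ∈ A | (u - i).val < n / 2} with hS
  set T := {u ∈ A | (u - (i + 1)).val < n / 2} with hT
  change #T ≤ #S + _
  have hTS : T ⊆ insert (i + ((n / 2 : ℕ) : ZMod n)) S := by
    intro u hu
    simp only [hT, hS, mem_filter, mem_insert] at hu ⊢
    have := hi u hu.2
    tauto
  by_cases hmem : i + ((n / 2 : ℕ) : ZMod n) ∈ A
  · by_cases hiA : i ∈ A
    · have hiS : i ∈ S := by simp [hS, hiA, h0]
      have : T ⊆ insert (i + ((n / 2 : ℕ) : ZMod n)) (S.erase i) := by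
        intro u hu
        have h₁ := hTS hu
        have h₂ := (hi u (mem_filter.mp hu).2).1
        simp only [mem_insert, mem_erase] at h₁ ⊢
        tauto
      have := (card_le_card this).trans (card_insert_le _ _)
      rw [card_erase_add_one hiS] at this
      omega
    · rw [if_pos ⟨hmem, hiA⟩]
      exact (card_le_card hTS).trans (card_insert_le _ _)
  · have : T ⊆ S := by
      intro u hu
      rcases mem_insert.mp (hTS hu) with rfl | h
      · exact absurd (mem_filter.mp hu).1 hmem
      · exact h
    have := card_le_card this
    omega

lemma arcCount_le_add_card (A : Finset (ZMod n)) (i j : ZMod n) :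
    arcCount A j ≤ arcCount A i + #{v : ZMod n | v + (n / 2 : ℕ) ∈ A ∧ v ∉ A} := by
  have walk : ∀ t : ℕ, arcCount A (i + t) ≤ arcCount A i +
      ∑ s ∈ range t, if i + s + (n / 2 : ℕ) ∈ A ∧ i + (s : ZMod n) ∉ A then 1 else 0 := by
    intro t
    induction t with
    | zero => simp
    | succ t ih =>
      rw [sum_range_succ, Nat.cast_succ, ← add_assoc]
      have := arcCount_add_one_le A (i + t)
      omega
  have h := walk (j - i).val
  rw [← card_filter] at h
  simp only [ZMod.natCast_val, ZMod.cast_id', id_eq, add_sub_cancel] at h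
  refine h.trans (Nat.add_le_add_left ?_ _)
  refine card_le_card_of_injOn (fun s : ℕ => i + s) ?_ ?_
  · intro s hs
    simpa using (mem_filter.mp hs).2
  · intro s hs t ht hst
    have hlt := ZMod.val_lt (j - i)
    have hs' := mem_range.mp (mem_filter.mp hs).1
    have ht' := mem_range.mp (mem_filter.mp ht).1
    have := congrArg ZMod.val (add_left_cancel hst)
    rwa [ZMod.val_cast_of_lt (by omega), ZMod.val_cast_of_lt (by omega)] at this

/-- A set that is entered at most once by the half-turn `v ↦ v + n / 2` is a maximizer. -/
lemma isWienerMaximizer_of_card_le_one {A : Finset (ZMod n)}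
    (h : #{v : ZMod n | v + (n / 2 : ℕ) ∈ A ∧ v ∉ A} ≤ 1) :
    IsWienerMaximizer (cycleGraphZMod n) A := by
  obtain ⟨i, -, hi⟩ := exists_min_image univ (arcCount A) ⟨0, mem_univ 0⟩
  refine isWienerMaximizer_of_arcCount (arcCount A i) fun j => ?_
  have h₁ := hi j (mem_univ j)
  have h₂ := arcCount_le_add_card A i j
  omega

end Arcs

section HalfTurnOrder

variable {n : ℕ}

/-- The enumeration `0, h, -1, h - 1, -2, h - 2, …` of the vertices of the cycle, with
`h = n / 2`. -/
def halfTurnVertex (n p : ℕ) : ZMod n :=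
  -((p / 2 : ℕ) : ZMod n) + ((p % 2 : ℕ) : ZMod n) * ((n / 2 : ℕ) : ZMod n)

/-- The action of the half-turn `v ↦ v + n / 2` on positions in `halfTurnVertex`. -/
def halfTurnNext (n p : ℕ) : ℕ :=
  if n % 2 = 0 then (if p % 2 = 0 then p + 1 else p - 1) else (if p + 1 = n then 0 else p + 1)

lemma halfTurnNext_lt {p : ℕ} (hp : p < n) : halfTurnNext n p < n := by
  unfold halfTurnNext
  split_ifs <;> omega

lemma halfTurnVertex_add_half {p : ℕ} (hp : p < n) :
    halfTurnVertex n p + (n / 2 : ℕ) = halfTurnVertex n (halfTurnNext n p) := by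
  have hself : ((n / 2 : ℕ) : ZMod n) * 2 + ((n % 2 : ℕ) : ZMod n) = 0 := by
    have : ((n / 2 * 2 + n % 2 : ℕ) : ZMod n) = 0 := by
      rw [Nat.div_add_mod', ZMod.natCast_self]
    exact_mod_cast this
  unfold halfTurnNext
  obtain ⟨q, rfl | rfl⟩ := Nat.even_or_odd' p
  · have h₁ : (2 * q) / 2 = q := by omega
    have h₂ : (2 * q) % 2 = 0 := by omega
    have h₃ : (2 * q + 1) / 2 = q := by omega
    have h₄ : (2 * q + 1) % 2 = 1 := by omega
    split_ifs with hn hlast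
    · simp [halfTurnVertex, h₃, h₄]
    · have : n / 2 = q := by omega
      simp [halfTurnVertex, this]
    · simp [halfTurnVertex, h₃, h₄]
  · have h₁ : (2 * q + 1) / 2 = q := by omega
    have h₂ : (2 * q + 1) % 2 = 1 := by omega
    have h₃ : (2 * q + 1 + 1) / 2 = q + 1 := by omega
    have h₄ : (2 * q + 1 + 1) % 2 = 0 := by omega
    split_ifs with hn hodd hlast
    · omega
    · rw [hn] at hself
      simp only [halfTurnVertex, h₁, h₂, Nat.add_sub_cancel, Nat.mul_mod_right,
        Nat.mul_div_cancel_left q two_pos]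
      linear_combination hself
    · omega
    · rw [show n % 2 = 1 by omega] at hself
      simp only [halfTurnVertex, h₁, h₂, h₃, h₄]
      push_cast at hself ⊢
      linear_combination hself

variable [NeZero n]

lemma halfTurnVertex_bijective : Function.Bijective fun p : Fin n => halfTurnVertex n p := by
  rw [Fintype.bijective_iff_injective_and_card]
  refine ⟨fun p q hpq => ?_, by simp [ZMod.card]⟩
  have hp := p.isLt
  have hq := q.isLt
  have hcast : ((-((p / 2 : ℕ) : ℤ) + ((p % 2 : ℕ) : ℤ) * ((n / 2 : ℕ) : ℤ) : ℤ) : ZMod n) =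
      ((-((q / 2 : ℕ) : ℤ) + ((q % 2 : ℕ) : ℤ) * ((n / 2 : ℕ) : ℤ) : ℤ) : ZMod n) := by
    simp only [Int.cast_add, Int.cast_neg, Int.cast_mul, Int.cast_natCast]
    exact hpq
  rw [ZMod.intCast_eq_intCast_iff_dvd_sub] at hcast
  rcases Nat.mod_two_eq_zero_or_one p with h₁ | h₁ <;>
    rcases Nat.mod_two_eq_zero_or_one q with h₂ | h₂ <;>
    rw [h₁, h₂] at hcast <;>
    have h₀ := Int.eq_zero_of_abs_lt_dvd hcast (by rw [abs_lt]; omega) <;>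
    ext <;> omega

/-- The vertices occupying an interval of positions form a maximizer, provided the interval
starts at an even position if its length is even. -/
lemma isWienerMaximizer_of_interval {A : Finset (ZMod n)} (s m : ℕ)
    (hA : ∀ p < n, halfTurnVertex n p ∈ A ↔ s ≤ p ∧ p < s + m)
    (hs : Even m → Even s) : IsWienerMaximizer (cycleGraphZMod n) A := by
  refine isWienerMaximizer_of_card_le_one (card_le_one.mpr fun v hv w hw => ?_)
  obtain ⟨⟨p, hp⟩, rfl⟩ := halfTurnVertex_bijective.surjective v
  obtain ⟨⟨q, hq⟩, rfl⟩ := halfTurnVertex_bijective.surjective w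
  simp only [mem_filter_univ] at hv hw ⊢
  rw [halfTurnVertex_add_half hp, hA _ (halfTurnNext_lt hp), hA _ hp] at hv
  rw [halfTurnVertex_add_half hq, hA _ (halfTurnNext_lt hq), hA _ hq] at hw
  congr 1
  unfold halfTurnNext at hv hw
  rw [Nat.even_iff, Nat.even_iff] at hs
  split_ifs at hv hw <;> omega

end HalfTurnOrder

section Colorings

/-- The colors of a linearly ordered vertex set can be permuted so that the color classes become
intervals, those of even size starting at an even position. -/
lemma exists_perm_colorClass_interval {n k : ℕ} (F : Fin n → Fin k) :
    ∃ τ : Equiv.Perm (Fin n), ∀ c : Fin k, ∃ s : ℕ,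
      (∀ p, F (τ p) = c ↔ s ≤ p.val ∧ p.val < s + #(colorClass F c)) ∧
      (Even #(colorClass F c) → Even s) := by
  let K : Fin k → ℕ := fun c => (#(colorClass F c) % 2) * k + c + 1
  have hK : Function.Injective K := by
    intro a b hab
    have ha := a.isLt
    have hb := b.isLt
    simp only [K] at hab
    ext
    rcases Nat.mod_two_eq_zero_or_one #(colorClass F a) with h₁ | h₁ <;>
      rcases Nat.mod_two_eq_zero_or_one #(colorClass F b) with h₂ | h₂ <;>
      rw [h₁, h₂] at hab <;> omega
  let τ := Tuple.sort (K ∘ F)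
  have hmono : Monotone ((K ∘ F) ∘ τ) := Tuple.monotone_sort (K ∘ F)
  let N : ℕ → ℕ := fun y => #{p : Fin n | ((K ∘ F) ∘ τ) p ≤ y}
  have hN : ∀ (y : ℕ) (p : Fin n), p.val < N y ↔ K (F (τ p)) ≤ y := fun y p =>
    Tuple.lt_card_le_iff_apply_le_of_monotone (j := p) hmono
  have hclass : ∀ c, #{p : Fin n | F (τ p) = c} = #(colorClass F c) := fun c =>
    card_equiv τ fun p => by simp [colorClass]
  have hsucc : ∀ c, N (K c) = N (K c - 1) + #(colorClass F c) := by
    intro c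
    change #{p : Fin n | ((K ∘ F) ∘ τ) p ≤ K c} = #{p : Fin n | ((K ∘ F) ∘ τ) p ≤ K c - 1} + _
    rw [← hclass, ← card_union_of_disjoint]
    · refine congrArg card (Finset.ext fun p => ?_)
      have : F (τ p) = c ↔ K (F (τ p)) = K c := hK.eq_iff.symm
      have hpos : 0 < K c := Nat.succ_pos _
      simp only [mem_union, mem_filter_univ, Function.comp_apply, this]
      omega
    · rw [Finset.disjoint_left]
      intro p hp hp'
      simp only [mem_filter_univ, Function.comp_apply] at hp hp'
      rw [hp'] at hp
      have hpos : 0 < K c := Nat.succ_pos _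
      omega
  refine ⟨τ, fun c => ⟨N (K c - 1), fun p => ?_, fun heven => ?_⟩⟩
  · rw [← hsucc, hN, ← not_lt, hN, ← hK.eq_iff]
    have hpos : 0 < K c := Nat.succ_pos _
    omega
  · have hfib : N (K c - 1) = ∑ d ∈ univ.filter (fun d => K d ≤ K c - 1), #(colorClass F d) := by
      simp only [N]
      rw [card_eq_sum_card_fiberwise (f := F ∘ τ) (t := univ.filter (fun d => K d ≤ K c - 1))
        (fun p hp => by simpa using hp)]
      refine sum_congr rfl fun d hd => ?_
      rw [← hclass, filter_filter]
      congr 1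
      ext p
      simp only [mem_filter_univ, Function.comp_apply] at hd ⊢
      exact ⟨fun h => h.2, fun h => ⟨h ▸ hd, h⟩⟩
    rw [hfib]
    refine even_sum _ fun d hd => ?_
    simp only [mem_filter_univ, K, Nat.even_iff.mp heven] at hd
    have hc := c.isLt
    rw [Nat.even_iff]
    by_contra hodd
    rw [Nat.mod_two_ne_zero.mp hodd] at hd
    omega

lemma exists_coloring_classes_maximize {n k : ℕ} [NeZero n] (f : ZMod n → Fin k) :
    ∃ g : ZMod n → Fin k, (∀ c, #(colorClass g c) = #(colorClass f c)) ∧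
      ∀ c, IsWienerMaximizer (cycleGraphZMod n) (colorClass g c) := by
  let P : Fin n ≃ ZMod n := Equiv.ofBijective _ halfTurnVertex_bijective
  obtain ⟨τ, hτ⟩ := exists_perm_colorClass_interval (f ∘ P)
  refine ⟨f ∘ P ∘ τ ∘ P.symm, fun c => ?_, fun c => ?_⟩
  · exact card_equiv ((P.symm.trans τ).trans P) fun v => by simp [colorClass]
  · obtain ⟨s, hs, heven⟩ := hτ c
    refine isWienerMaximizer_of_interval s _ (fun p hp => ?_) heven
    have hP : P.symm (halfTurnVertex n p) = ⟨p, hp⟩ := P.symm_apply_apply ⟨p, hp⟩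
    rw [← hs ⟨p, hp⟩]
    simp [colorClass, hP]

lemma wienerColoring_le_of_classes_maximize {V : Type*} [Fintype V] [DecidableEq V] {k : ℕ}
    (G : SimpleGraph V) {f g : V → Fin k} (hf : ∀ i, IsWienerMaximizer G (colorClass f i))
    (h : colorType g = colorType f) : wienerColoring G g ≤ wienerColoring G f := by
  let M : ℕ → ℕ := fun m => (powersetCard m univ).sup (wienerSet G)
  have le_M : ∀ A, wienerSet G A ≤ M #A := fun A =>
    le_sup (mem_powersetCard.mpr ⟨subset_univ A, rfl⟩)
  have M_le : ∀ i, M #(colorClass f i) ≤ wienerSet G (colorClass f i) := fun i =>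
    Finset.sup_le fun B hB => hf i B (mem_powersetCard.mp hB).2
  have sum_M : ∑ i, M #(colorClass g i) = ∑ i, M #(colorClass f i) := by
    simpa [colorType, Function.comp_def, Multiset.map_map, Finset.sum] using congrArg (fun t => (t.map M).sum) h
  calc wienerColoring G g ≤ ∑ i, M #(colorClass g i) := sum_le_sum fun i _ => le_M _
    _ = ∑ i, M #(colorClass f i) := sum_M
    _ ≤ wienerColoring G f := sum_le_sum fun i _ => M_le i

end Colorings

/-- A surjective `f : V(C_n) → {1,…,k}` is a `k`-color weak maximizer of `W` on `C_n`
iff every color class `f⁻¹(i)` is a maximizer of `W` on `C_n`. -/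
theorem weakMaximizer_iff_classes_maximize (n k : ℕ) [NeZero n]
    (f : ZMod n → Fin k) (hf : Function.Surjective f) :
    IsWeakMaximizer (cycleGraphZMod n) f ↔
      ∀ i : Fin k, IsWienerMaximizer (cycleGraphZMod n) (colorClass f i) := by
  refine ⟨fun h i B hB => ?_, fun h => ⟨hf, fun g _ hg =>
    wienerColoring_le_of_classes_maximize _ h hg⟩⟩
  obtain ⟨g, hcard, hg⟩ := exists_coloring_classes_maximize f
  have hsurj : Function.Surjective g := by
    intro c
    obtain ⟨v, hv⟩ := hf c
    have hpos : 0 < #(colorClass g c) := by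
      rw [hcard, card_pos]
      exact ⟨v, by simp [colorClass, hv]⟩
    obtain ⟨w, hw⟩ := card_pos.mp hpos
    exact ⟨w, by simpa [colorClass] using hw⟩
  have hle := h.2 g hsurj (by simp [colorType, hcard])
  have hclass : ∀ j, wienerSet (cycleGraphZMod n) (colorClass f j) ≤
      wienerSet (cycleGraphZMod n) (colorClass g j) := fun j => hg j _ (hcard j).symm
  have heq := (sum_eq_sum_iff_of_le fun j _ => hclass j).mp
    (le_antisymm (sum_le_sum fun j _ => hclass j) hle) i (mem_univ i)
  rw [heq]
  exact hg i B (hB.trans (hcard i).symm)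
end

section
/- Suppose f, f' : V(P_n) → {1,...,k} are k-color weak maximizers of the Wiener index W on P_n. If type(f) ≺ type(f') and type(f) ≠ type(f'), then W(f) < W(f'). -/
open SimpleGraph Finset

/-- The sum of the truncated differences `a + 1 - c`, over the entries `a` of `x`. -/
def excess (x : Multiset ℕ) (c : ℕ) : ℕ := (x.map (fun a => a + 1 - c)).sum

/-- The sum of `⌊(a - c) / 2⌋` over the entries `a` of `x`. -/
def halfExcess (x : Multiset ℕ) (c : ℕ) : ℕ := (x.map (fun a => (a - c) / 2)).sum

/-- The value of the Wiener index at the weak maximizers of type `x` on a path. -/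
def typeValue (x : Multiset ℕ) : ℤ :=
  ∑ c ∈ Finset.range x.sum, (halfExcess x c : ℤ) * (x.sum - halfExcess x c)

theorem two_mul_halfExcess_le (x : Multiset ℕ) (c : ℕ) : 2 * halfExcess x c ≤ x.sum := by
  induction x using Multiset.induction with
  | empty => simp [halfExcess]
  | cons a s ih =>
    simp only [halfExcess, Multiset.map_cons, Multiset.sum_cons] at ih ⊢
    omega

theorem halfExcess_succ_le (x : Multiset ℕ) (c : ℕ) : halfExcess x (c + 1) ≤ halfExcess x c := by
  induction x using Multiset.induction with
  | empty => simp [halfExcess]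
  | cons a s ih =>
    simp only [halfExcess, Multiset.map_cons, Multiset.sum_cons] at ih ⊢
    omega

theorem typeValue_transfer_lt (s : Multiset ℕ) (a b : ℕ) (ha : 1 ≤ a) (hab : a ≤ b) :
    typeValue (a ::ₘ b ::ₘ s) < typeValue ((a - 1) ::ₘ (b + 1) ::ₘ s) := by
  have hsum : ((a - 1) ::ₘ (b + 1) ::ₘ s).sum = (a ::ₘ b ::ₘ s).sum := by
    simp only [Multiset.sum_cons]; omega
  unfold typeValue
  rw [hsum]
  obtain ⟨n, hn⟩ : ∃ n, n = (a ::ₘ b ::ₘ s).sum := ⟨_, rfl⟩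
  rw [← hn]
  have hn' : n = a + (b + s.sum) := by simpa using hn
  have hT : ∀ c, halfExcess (a ::ₘ b ::ₘ s) c = (a - c) / 2 + ((b - c) / 2 + halfExcess s c) := by
    intro c; simp [halfExcess]
  have hT' : ∀ c, halfExcess ((a - 1) ::ₘ (b + 1) ::ₘ s) c
      = (a - 1 - c) / 2 + ((b + 1 - c) / 2 + halfExcess s c) := by
    intro c; simp [halfExcess]
  have ht := two_mul_halfExcess_le s
  have htm := halfExcess_succ_le s
  generalize halfExcess (a ::ₘ b ::ₘ s) = T at *
  generalize halfExcess ((a - 1) ::ₘ (b + 1) ::ₘ s) = T' at *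
  generalize halfExcess s = t at *
  have hTn : ∀ c, 2 * T c ≤ n := fun c => by have := ht c; have := hT c; omega
  have hTn' : ∀ c, 2 * T' c ≤ n := fun c => by have := ht c; have := hT' c; omega
  by_cases hpar : (b - a) % 2 = 1
  · apply Finset.sum_lt_sum
    · intro c _
      have h1 : T' c = T c ∨ T' c = T c + 1 := by rw [hT, hT']; have := hT c; have := hT' c; omega
      have h2 := hTn' c
      rcases h1 with h1 | h1
      · rw [h1]
      · rw [h1] at h2 ⊢; push_cast; zify at h2; nlinarith
    · refine ⟨b - 1, by simp; omega, ?_⟩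
      have h1 : T' (b - 1) = T (b - 1) + 1 := by rw [hT, hT']; omega
      have h2 := hTn' (b - 1)
      rw [h1] at h2 ⊢; push_cast; zify at h2; nlinarith
  · obtain ⟨R, hR⟩ : ∃ R : ℕ → ℤ, ∀ c, R c =
      if c < b ∧ (b - c) % 2 = 1 then (n : ℤ) - 2 * T c - 1 else 0 := ⟨_, fun _ => rfl⟩
    obtain ⟨D, hD⟩ : ∃ D : ℕ → ℤ, ∀ c, D c =
      if c + 2 ≤ a ∧ (a - c) % 2 = 0 then (n : ℤ) - 2 * T c + 1 else 0 := ⟨_, fun _ => rfl⟩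
    have hdiff : ∀ c, (T' c : ℤ) * (n - T' c) - T c * (n - T c) = R c - D c := by
      intro c
      rw [hR, hD]
      split_ifs with h1 h2 h2
      · omega
      · have : T' c = T c + 1 := by rw [hT, hT']; omega
        rw [this]; push_cast; ring
      · have : T c = T' c + 1 := by rw [hT, hT']; omega
        rw [this]; push_cast; ring
      · have : T c = T' c := by rw [hT, hT']; omega
        rw [this]; ring
    have hRpos : ∀ c, c < b → (b - c) % 2 = 1 → 1 ≤ R c := by
      intro c h1 h2
      have : T' c = T c + 1 := by rw [hT, hT']; omega
      have := hTn' c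
      rw [hR, if_pos ⟨h1, h2⟩]; omega
    have hRnn : ∀ c, 0 ≤ R c := by
      intro c
      by_cases h : c < b ∧ (b - c) % 2 = 1
      · linarith [hRpos c h.1 h.2]
      · rw [hR, if_neg h]
    have hRD : ∀ c, c + 2 ≤ a ∧ (a - c) % 2 = 0 → 1 ≤ R (c + 1) - D c := by
      intro c h
      have h1 : T (c + 1) + 2 ≤ T c := by rw [hT, hT]; have := htm c; omega
      rw [hR, hD, if_pos h, if_pos (by omega)]
      omega
    have hRDnn : ∀ c, 0 ≤ R (c + 1) - D c := by
      intro c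
      by_cases h : c + 2 ≤ a ∧ (a - c) % 2 = 0
      · linarith [hRD c h]
      · rw [hD, if_neg h]; linarith [hRnn (c + 1)]
    rw [← sub_pos, ← Finset.sum_sub_distrib, Finset.sum_congr rfl fun c _ => hdiff c]
    obtain ⟨m, rfl⟩ : ∃ m, n = m + 1 := ⟨n - 1, by omega⟩
    have hDm : D m = 0 := by rw [hD, if_neg (by omega)]
    rw [Finset.sum_sub_distrib, Finset.sum_range_succ' R, Finset.sum_range_succ D, hDm,
      add_zero, add_sub_right_comm, ← Finset.sum_sub_distrib]
    by_cases hb : b = 1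
    · have := hRpos 0 (by omega) (by omega)
      have := Finset.sum_nonneg fun c (_ : c ∈ Finset.range m) => hRDnn c
      linarith
    · have h1 : 0 < R (b - 2 + 1) - D (b - 2) := by
        by_cases h : b - 2 + 2 ≤ a ∧ (a - (b - 2)) % 2 = 0
        · linarith [hRD _ h]
        · rw [hD, if_neg h]; linarith [hRpos (b - 2 + 1) (by omega) (by omega)]
      have := Finset.single_le_sum (f := fun c => R (c + 1) - D c) (fun c _ => hRDnn c)
        (show b - 2 ∈ Finset.range m by simp; omega)
      linarith [hRnn 0]

theorem card_filter_eq_excess (x : Multiset ℕ) (m q : ℕ) (hmq : m ≤ q) :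
    (x.filter (fun a => m ≤ a ∧ a < q)).card + excess x (m + 1) + excess x q
      = excess x m + excess x (q + 1) := by
  induction x using Multiset.induction with
  | empty => simp [excess]
  | cons a s ih =>
    simp only [excess, Multiset.map_cons, Multiset.sum_cons] at ih ⊢
    by_cases h : m ≤ a ∧ a < q
    · rw [Multiset.filter_cons_of_pos (p := fun a => m ≤ a ∧ a < q) _ h, Multiset.card_cons]; omega
    · rw [Multiset.filter_cons_of_neg (p := fun a => m ≤ a ∧ a < q) _ h]; omega

theorem excess_zero (x : Multiset ℕ) : excess x 0 = x.sum + x.card := by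
  simp [excess, Multiset.sum_map_add]

theorem excess_one (x : Multiset ℕ) : excess x 1 = x.sum := by
  simp [excess]

theorem excess_eq_zero {x : Multiset ℕ} {c : ℕ} (hc : x.sum + 1 ≤ c) : excess x c = 0 := by
  rw [excess, Multiset.sum_eq_zero_iff]
  intro v hv
  obtain ⟨a, ha, rfl⟩ := Multiset.mem_map.1 hv
  have := Multiset.single_le_sum (fun _ _ => Nat.zero_le _) a ha
  omega

theorem eq_of_excess_eq {x y : Multiset ℕ} (h : ∀ c, excess x c = excess y c) : x = y := by
  ext a
  have key : ∀ z : Multiset ℕ, z.count a = (z.filter (fun b => a ≤ b ∧ b < a + 1)).card := by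
    intro z
    rw [Multiset.count_eq_card_filter_eq]
    congr 1
    apply Multiset.filter_congr
    intros; omega
  have hx := card_filter_eq_excess x a (a + 1) (by omega)
  have hy := card_filter_eq_excess y a (a + 1) (by omega)
  rw [key, key]
  simp only [h] at hx
  omega

/-- If `x` is majorized by `y ≠ x`, there is a transfer in `x` that keeps it majorized by `y`. -/
theorem exists_transfer {x y : Multiset ℕ} (hcard : x.card = y.card) (hsum : x.sum = y.sum)
    (hle : ∀ c, excess x c ≤ excess y c) (hne : x ≠ y) :
    ∃ a b s, 1 ≤ a ∧ a ≤ b ∧ x = a ::ₘ b ::ₘ s ∧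
      ∀ c, a + 1 ≤ c → c ≤ b + 1 → excess x c < excess y c := by
  have hex : ∃ m, excess x m < excess y m := by
    by_contra! h
    exact hne (eq_of_excess_eq fun c => le_antisymm (hle c) (h c))
  classical
  have hm := Nat.find_spec hex
  have hmin := fun c => Nat.find_min (m := c) hex
  generalize Nat.find hex = m at hm hmin
  have h2 : 2 ≤ m := by
    by_contra! h
    have : m = 0 ∨ m = 1 := by omega
    rcases this with rfl | rfl
    · rw [excess_zero, excess_zero] at hm; omega
    · rw [excess_one, excess_one] at hm; omega
  have hex2 : ∃ q, m < q ∧ excess y q ≤ excess x q :=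
    ⟨m + y.sum + 1, by omega, by rw [excess_eq_zero (x := y) (by omega)]; omega⟩
  have hq := Nat.find_spec hex2
  have hqmin := fun c => Nat.find_min (m := c) hex2
  generalize Nat.find hex2 = q at hq hqmin
  have hpos : ∀ c, m ≤ c → c < q → excess x c < excess y c := by
    intro c h1 h2
    rcases eq_or_lt_of_le h1 with rfl | h1
    · exact hm
    · by_contra! h
      exact hqmin c h2 ⟨h1, h⟩
  have hx := card_filter_eq_excess x (m - 1) (q - 1) (by omega)
  have hy := card_filter_eq_excess y (m - 1) (q - 1) (by omega)
  rw [show m - 1 + 1 = m by omega, show q - 1 + 1 = q by omega] at hx hy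
  have e1 := hle (m - 1)
  have e2 := hmin (m - 1) (by omega)
  have e3 := hpos (q - 1) (by omega) (by omega)
  have e4 := hle q
  have h2card : 2 ≤ (x.filter (fun a => m - 1 ≤ a ∧ a < q - 1)).card := by omega
  obtain ⟨u, hu⟩ := Multiset.le_iff_exists_add.1
    (Multiset.filter_le (fun a => m - 1 ≤ a ∧ a < q - 1) x)
  have hmem : ∀ c ∈ x.filter (fun a => m - 1 ≤ a ∧ a < q - 1), m - 1 ≤ c ∧ c < q - 1 :=
    fun c hc => (Multiset.mem_filter.1 hc).2
  generalize x.filter (fun a => m - 1 ≤ a ∧ a < q - 1) = w at hu hmem h2card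
  obtain ⟨a, ha⟩ := Multiset.card_pos_iff_exists_mem.1 (show 0 < w.card by omega)
  obtain ⟨w, rfl⟩ := Multiset.exists_cons_of_mem ha
  rw [Multiset.card_cons] at h2card
  obtain ⟨b, hb⟩ := Multiset.card_pos_iff_exists_mem.1 (show 0 < w.card by omega)
  obtain ⟨w, rfl⟩ := Multiset.exists_cons_of_mem hb
  have hA := hmem a (by simp)
  have hB := hmem b (by simp)
  obtain ⟨s, hs'⟩ : ∃ s, x = a ::ₘ b ::ₘ s := ⟨w + u, by rw [hu]; simp⟩
  rcases le_total a b with hab | hab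
  · exact ⟨a, b, s, by omega, hab, hs', fun c h1 h2 => hpos c (by omega) (by omega)⟩
  · exact ⟨b, a, s, by omega, hab, by rw [hs', Multiset.cons_swap],
      fun c h1 h2 => hpos c (by omega) (by omega)⟩

theorem typeValue_lt_of_excess_le {x y : Multiset ℕ} (hcard : x.card = y.card)
    (hsum : x.sum = y.sum) (hle : ∀ c, excess x c ≤ excess y c) (hne : x ≠ y) :
    typeValue x < typeValue y := by
  induction h : ∑ c ∈ Finset.range (y.sum + 2), (excess y c - excess x c) using Nat.strong_induction_on
    generalizing x with
  | _ N ih =>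
  obtain ⟨a, b, s, ha, hab, rfl, hlt⟩ := exists_transfer hcard hsum hle hne
  have hstep := typeValue_transfer_lt s a b ha hab
  have hex : ∀ c, excess ((a - 1) ::ₘ (b + 1) ::ₘ s) c
      = excess (a ::ₘ b ::ₘ s) c + if a + 1 ≤ c ∧ c ≤ b + 1 then 1 else 0 := by
    intro c
    simp only [excess, Multiset.map_cons, Multiset.sum_cons]
    split_ifs <;> omega
  have hle' : ∀ c, excess ((a - 1) ::ₘ (b + 1) ::ₘ s) c ≤ excess y c := by
    intro c
    have h1 := hle c
    have h2 := hlt c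
    rw [hex]
    split_ifs with h3
    · exact h2 h3.1 h3.2
    · exact h1
  by_cases hy : (a - 1) ::ₘ (b + 1) ::ₘ s = y
  · rwa [hy] at hstep
  · refine hstep.trans (ih _ ?_ (by simpa using hcard) ?_ hle' hy rfl)
    · rw [← h]
      apply Finset.sum_lt_sum
      · intro c _
        rw [hex]; omega
      · refine ⟨a + 1, ?_, ?_⟩
        · simp only [Multiset.sum_cons] at hsum
          simp; omega
        · have := hlt (a + 1) le_rfl (by omega)
          rw [hex, if_pos (by omega)]; omega
    · simp only [Multiset.sum_cons] at hsum ⊢; omega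

theorem sum_take_le_excess (l : List ℕ) (c j : ℕ) :
    (l.take j).sum ≤ excess (l : Multiset ℕ) (c + 1) + c * j := by
  induction l generalizing j with
  | nil => simp
  | cons a l ih =>
    cases j with
    | zero => simp
    | succ j =>
      have := ih j
      simp only [excess, Multiset.map_coe, Multiset.sum_coe, List.take_succ_cons, List.map_cons,
        List.sum_cons, mul_add] at this ⊢
      omega

theorem exists_sum_take_eq_excess {l : List ℕ} (hl : l.Pairwise (· ≥ ·)) (c : ℕ) :
    ∃ j, (l.take j).sum = excess (l : Multiset ℕ) (c + 1) + c * j := by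
  induction l with
  | nil => exact ⟨0, by simp [excess]⟩
  | cons a l ih =>
    rw [List.pairwise_cons] at hl
    by_cases ha : c ≤ a
    · obtain ⟨j, hj⟩ := ih hl.2
      refine ⟨j + 1, ?_⟩
      simp only [excess, Multiset.map_coe, Multiset.sum_coe, List.take_succ_cons, List.map_cons,
        List.sum_cons, mul_add] at hj ⊢
      omega
    · refine ⟨0, ?_⟩
      simp only [List.take_zero, List.sum_nil, mul_zero, add_zero]
      symm
      rw [excess, Multiset.sum_eq_zero_iff]
      intro v hv
      obtain ⟨b, hb, rfl⟩ := Multiset.mem_map.1 hv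
      rw [Multiset.mem_coe, List.mem_cons] at hb
      rcases hb with rfl | hb
      · omega
      · have := hl.1 b hb
        omega

theorem MajorizedBy.excess_le {x y : Multiset ℕ} (h : MajorizedBy x y) (c : ℕ) :
    excess x c ≤ excess y c := by
  obtain ⟨hcard, hsum, hj⟩ := h
  cases c with
  | zero => rw [excess_zero, excess_zero, hcard, hsum]
  | succ c =>
    have hcoe : ∀ z : Multiset ℕ, (((z.sort (· ≤ ·)).reverse : List ℕ) : Multiset ℕ) = z := by
      intro z; rw [Multiset.coe_reverse, Multiset.sort_eq]
    have hl : (x.sort (· ≤ ·)).reverse.Pairwise (· ≥ ·) :=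
      List.pairwise_reverse.2 (Multiset.pairwise_sort x (· ≤ ·))
    obtain ⟨j, h1⟩ := exists_sum_take_eq_excess hl c
    have h2 := sum_take_le_excess (y.sort (· ≤ ·)).reverse c j
    have h3 := hj j
    rw [hcoe] at h1 h2
    unfold sumLargest at h3
    omega

theorem MajorizedBy.typeValue_lt {x y : Multiset ℕ} (h : MajorizedBy x y) (hne : x ≠ y) :
    typeValue x < typeValue y :=
  typeValue_lt_of_excess_le h.1 h.2.1 h.excess_le hne

theorem pathGraph_dist {n : ℕ} (u v : Fin n) :
    ((pathGraph n).dist u v : ℤ) = |(u : ℤ) - v| := by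
  have hle : ∀ (d : ℕ) (u v : Fin n), (u : ℕ) + d = v → (pathGraph n).dist u v ≤ d := by
    intro d
    induction d with
    | zero =>
      intro u v h
      have : u = v := Fin.ext h
      simp [this]
    | succ d ih =>
      intro u v h
      have hw := v.isLt
      let w : Fin n := ⟨u + d, by omega⟩
      have h1 := ih u w rfl
      have h2 : (pathGraph n).Adj w v := pathGraph_adj.2 (Or.inl (by simp [w]; omega))
      have h3 := (pathGraph_preconnected n u w).dist_triangle_left v
      have h4 := dist_eq_one_iff_adj.2 h2
      omega
  have hge : ∀ {u v : Fin n} (p : (pathGraph n).Walk u v), |(u : ℤ) - v| ≤ p.length := by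
    intro u v p
    induction p with
    | nil => simp
    | cons h p ih =>
      rw [pathGraph_adj] at h
      rw [Walk.length_cons]
      rw [abs_le] at ih ⊢
      omega
  apply le_antisymm
  · rcases le_total (u : ℕ) v with h | h
    · have := hle (v - u) u v (by omega)
      rw [abs_of_nonpos (by omega)]; omega
    · have := hle (u - v) v u (by omega)
      rw [SimpleGraph.dist_comm, abs_of_nonneg (by omega)]; omega
  · obtain ⟨p, hp⟩ := (pathGraph_preconnected n u v).exists_walk_length_eq_dist
    rw [← hp]
    exact hge p

/-- The number of vertices to the right of `u` of the same color, minus the number of those to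
the left. -/
def sideBalance {n k : ℕ} (f : Fin n → Fin k) (u : Fin n) : ℤ :=
  ∑ v, if f u = f v then Int.sign ((v : ℤ) - u) else 0

/-- A sum of distances within the color classes, in positions `g` that are strictly increasing
on each class. -/
theorem sum_abs_sub_eq_sideBalance {n k : ℕ} (f : Fin n → Fin k) (g : Fin n → ℤ)
    (hg : ∀ u v, f u = f v → u < v → g u < g v) :
    ∑ u, ∑ v, (if f u = f v then |g u - g v| else 0) = - 2 * ∑ u, g u * sideBalance f u := by
  have h : ∀ u v, (if f u = f v then |g u - g v| else 0)
      = (if f u = f v then g v * Int.sign ((v : ℤ) - u) else 0)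
        - (if f u = f v then g u * Int.sign ((v : ℤ) - u) else 0) := by
    intro u v
    split_ifs with hf
    · rcases lt_trichotomy u v with h | h | h
      · have h1 := hg u v hf h
        rw [Int.sign_eq_one_of_pos (by simpa using h), abs_of_nonpos (by omega)]
        ring
      · subst h; simp
      · have h1 := hg v u hf.symm h
        rw [Int.sign_eq_neg_one_of_neg (by simpa using h), abs_of_nonneg (by omega)]
        ring
    · simp
  simp only [h, Finset.sum_sub_distrib]
  rw [Finset.sum_comm]
  have h2 : ∀ u v, (if f v = f u then g u * Int.sign ((u : ℤ) - v) else 0)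
      = - (if f u = f v then g u * Int.sign ((v : ℤ) - u) else 0) := by
    intro u v
    rw [← neg_sub (v : ℤ) u, Int.sign_neg]
    by_cases h : f u = f v
    · rw [if_pos h, if_pos h.symm]; ring
    · rw [if_neg h, if_neg (Ne.symm h)]; ring
  simp only [h2, Finset.sum_neg_distrib]
  have h3 : ∀ u, g u * sideBalance f u
      = ∑ v, (if f u = f v then g u * Int.sign ((v : ℤ) - u) else 0) := by
    intro u
    rw [sideBalance, Finset.mul_sum]
    simp only [mul_ite, mul_zero]
  simp only [h3]
  ring

theorem two_mul_wienerSet {n : ℕ} (A : Finset (Fin n)) :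
    2 * (wienerSet (pathGraph n) A : ℤ) = ∑ u ∈ A, ∑ v ∈ A, |(u : ℤ) - v| := by
  have h1 : ((∑ p ∈ A.offDiag, (pathGraph n).dist p.1 p.2 : ℕ) : ℤ)
      = ∑ u ∈ A, ∑ v ∈ A, |(u : ℤ) - v| := by
    push_cast
    simp only [pathGraph_dist]
    rw [← Finset.sum_product', ← Finset.diag_union_offDiag A,
      Finset.sum_union (Finset.disjoint_diag_offDiag A), Finset.sum_diag]
    simp
  have h2 : (2 : ℤ) ∣ ∑ u ∈ A, ∑ v ∈ A, |(u : ℤ) - v| := by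
    have h3 : ∀ u v : ℤ, ∃ w : ℤ, |u - v| = u + v + 2 * w := fun u v => by
      rcases abs_choice (u - v) with h | h
      · exact ⟨-v, by rw [h]; ring⟩
      · exact ⟨-u, by rw [h]; ring⟩
    choose w hw using h3
    simp only [hw, Finset.sum_add_distrib, ← Finset.mul_sum, Finset.sum_const, nsmul_eq_mul]
    exact ⟨A.card * ∑ u ∈ A, (u : ℤ) + ∑ u ∈ A, ∑ v ∈ A, w u v, by ring⟩
  unfold wienerSet
  omega

theorem two_mul_wienerColoring {n k : ℕ} (f : Fin n → Fin k) :
    2 * (wienerColoring (pathGraph n) f : ℤ)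
      = ∑ u, ∑ v, (if f u = f v then |(u : ℤ) - v| else 0) := by
  unfold wienerColoring
  push_cast
  rw [Finset.mul_sum]
  simp only [two_mul_wienerSet]
  rw [← Finset.sum_fiberwise (s := Finset.univ) (g := f)
    (f := fun u => ∑ v, (if f u = f v then |(u : ℤ) - v| else 0))]
  refine Finset.sum_congr rfl fun i _ => Finset.sum_congr rfl fun u hu => ?_
  have hu' : f u = i := (Finset.mem_filter.1 hu).2
  rw [colorClass, Finset.sum_filter]
  refine Finset.sum_congr rfl fun v _ => ?_
  rw [hu']
  simp only [eq_comm]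

theorem wienerColoring_eq_sideBalance {n k : ℕ} (f : Fin n → Fin k) :
    (wienerColoring (pathGraph n) f : ℤ) = - ∑ u : Fin n, (u : ℤ) * sideBalance f u := by
  have h1 := two_mul_wienerColoring f
  have h2 := sum_abs_sub_eq_sideBalance f (fun u => (u : ℤ)) (fun u v _ h => by simpa using h)
  linarith

theorem sum_sideBalance {n k : ℕ} (f : Fin n → Fin k) : ∑ u, sideBalance f u = 0 := by
  have h2 := sum_abs_sub_eq_sideBalance f (fun u => (u : ℤ) + 1)
    (fun u v _ h => by simpa using h)
  have h3 := sum_abs_sub_eq_sideBalance f (fun u => (u : ℤ)) (fun u v _ h => by simpa using h)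
  simp only [add_sub_add_right_eq_sub, add_mul, one_mul, Finset.sum_add_distrib] at h2 h3
  linarith

theorem sum_sign_sub {n : ℕ} (u : Fin n) :
    ∑ v : Fin n, Int.sign ((v : ℤ) - u) = n - 1 - 2 * u := by
  rw [Fin.sum_univ_eq_sum_range (fun v => Int.sign ((v : ℤ) - u))]
  have h : ∀ m : ℕ, ∑ v ∈ Finset.range m, Int.sign ((v : ℤ) - (u : ℕ))
      = if m ≤ (u : ℕ) then - (m : ℤ) else m - 1 - 2 * (u : ℕ) := by
    intro m
    induction m with
    | zero => simp
    | succ m ih =>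
      rw [Finset.sum_range_succ, ih]
      rcases lt_trichotomy m (u : ℕ) with h | h | h
      · rw [Int.sign_eq_neg_one_of_neg (by omega), if_pos (by omega), if_pos (by omega)]
        push_cast; ring
      · rw [if_pos (by omega), if_neg (by omega), h]
        simp; ring
      · rw [Int.sign_eq_one_of_pos (by omega), if_neg (by omega), if_neg (by omega)]
        push_cast; ring
  rw [h, if_neg (by have := u.isLt; omega)]

theorem four_mul_wienerColoring {n k : ℕ} (f : Fin n → Fin k) :
    4 * (wienerColoring (pathGraph n) f : ℤ)
      = ∑ u : Fin n, ∑ v : Fin n,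
          Int.sign ((v : ℤ) - u) * (sideBalance f u - sideBalance f v) := by
  have h1 : ∑ u : Fin n, ∑ v : Fin n, Int.sign ((v : ℤ) - u) * sideBalance f v
      = - ∑ u : Fin n, ∑ v : Fin n, Int.sign ((v : ℤ) - u) * sideBalance f u := by
    rw [Finset.sum_comm]
    simp only [← Finset.sum_neg_distrib]
    refine Finset.sum_congr rfl fun u _ => Finset.sum_congr rfl fun v _ => ?_
    rw [← neg_sub (v : ℤ) u, Int.sign_neg]; ring
  simp only [mul_sub, Finset.sum_sub_distrib]
  rw [h1]
  simp only [← Finset.sum_mul, sum_sign_sub]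
  have h2 : ∑ u : Fin n, ((n : ℤ) - 1 - 2 * u) * sideBalance f u
      = (n - 1) * ∑ u, sideBalance f u - 2 * ∑ u : Fin n, (u : ℤ) * sideBalance f u := by
    rw [Finset.mul_sum, Finset.mul_sum, ← Finset.sum_sub_distrib]
    exact Finset.sum_congr rfl fun u _ => by ring
  rw [h2, sum_sideBalance, wienerColoring_eq_sideBalance]
  ring

theorem four_mul_wienerColoring_le {n k : ℕ} (f : Fin n → Fin k) :
    4 * (wienerColoring (pathGraph n) f : ℤ)
      ≤ ∑ u : Fin n, ∑ v : Fin n, |sideBalance f u - sideBalance f v| := by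
  rw [four_mul_wienerColoring]
  refine Finset.sum_le_sum fun u _ => Finset.sum_le_sum fun v _ => ?_
  rcases lt_trichotomy ((v : ℤ) - u) 0 with h | h | h
  · rw [Int.sign_eq_neg_one_of_neg h, neg_one_mul]
    exact neg_le_abs _
  · simp [h]
  · rw [Int.sign_eq_one_of_pos h, one_mul]
    exact le_abs_self _

theorem four_mul_wienerColoring_eq {n k : ℕ} {f : Fin n → Fin k} (hf : Antitone (sideBalance f)) :
    4 * (wienerColoring (pathGraph n) f : ℤ)
      = ∑ u : Fin n, ∑ v : Fin n, |sideBalance f u - sideBalance f v| := by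
  rw [four_mul_wienerColoring]
  refine Finset.sum_congr rfl fun u _ => Finset.sum_congr rfl fun v _ => ?_
  rcases lt_trichotomy u v with h | h | h
  · have h1 := hf h.le
    rw [Int.sign_eq_one_of_pos (by simpa using h), abs_of_nonneg (by omega), one_mul]
  · simp [h]
  · have h1 := hf h.le
    rw [Int.sign_eq_neg_one_of_neg (by simpa using h), abs_of_nonpos (by omega), neg_one_mul]

theorem colorType_comp_equiv {V : Type*} [Fintype V] {k : ℕ} (f : V → Fin k) (e : V ≃ V) :
    colorType (f ∘ e) = colorType f := by
  unfold colorType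
  congr 1
  funext i
  refine Finset.card_bij (fun v _ => e v) ?_ (fun a _ b _ h => e.injective h) ?_
  · intro v hv; simpa [colorClass] using hv
  · intro v hv
    exact ⟨e.symm v, by simpa [colorClass] using hv, by simp⟩

theorem swap_val_lt {n : ℕ} {p q u v : Fin n} (hpq : (q : ℕ) = p + 1) (huv : u < v)
    (hne : ¬ (u = p ∧ v = q)) : Equiv.swap p q u < Equiv.swap p q v := by
  simp only [Equiv.swap_apply_def]
  split_ifs <;> simp only [Fin.lt_def, Fin.ext_iff] at * <;> omega

theorem wienerColoring_swapColors {n k : ℕ} (f : Fin n → Fin k) {p q : Fin n}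
    (hpq : (q : ℕ) = p + 1) (hf : f p ≠ f q) :
    (wienerColoring (pathGraph n) (swapColors f p q) : ℤ)
      = wienerColoring (pathGraph n) f + sideBalance f q - sideBalance f p := by
  have h1 := two_mul_wienerColoring (swapColors f p q)
  have h2 := sum_abs_sub_eq_sideBalance f (fun u => (Equiv.swap p q u : ℤ)) (by
    intro u v huv h
    have := swap_val_lt hpq h (by rintro ⟨rfl, rfl⟩; exact hf huv)
    simpa using this)
  have h3 : ∑ u, ∑ v, (if f u = f v then
        |((Equiv.swap p q u : Fin n) : ℤ) - (Equiv.swap p q v : Fin n)| else 0)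
      = ∑ u : Fin n, ∑ v : Fin n,
        (if swapColors f p q u = swapColors f p q v then |(u : ℤ) - v| else 0) := by
    rw [← Equiv.sum_comp (Equiv.swap p q)]
    refine Finset.sum_congr rfl fun u _ => ?_
    rw [← Equiv.sum_comp (Equiv.swap p q)]
    simp only [swapColors, Function.comp_apply, Equiv.swap_apply_self]
    rfl
  have h4 : ∑ u : Fin n, ((Equiv.swap p q u : Fin n) : ℤ) * sideBalance f u
      = ∑ u : Fin n, (u : ℤ) * sideBalance f u + sideBalance f p - sideBalance f q := by
    have h5 : ∀ u : Fin n, ((Equiv.swap p q u : Fin n) : ℤ) * sideBalance f u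
        = (u : ℤ) * sideBalance f u + (if u = p then sideBalance f u else 0)
          - (if u = q then sideBalance f u else 0) := by
      intro u
      have hne : p ≠ q := fun h => by subst h; omega
      simp only [Equiv.swap_apply_def]
      split_ifs with e1 e2 e2
      · exact absurd (e1.symm.trans e2) hne
      · rw [e1, hpq]; push_cast; ring
      · rw [e2, hpq]; push_cast; ring
      · ring
    simp only [h5, Finset.sum_sub_distrib, Finset.sum_add_distrib]
    simp
  have h6 := wienerColoring_eq_sideBalance f
  linarith

theorem sideBalance_eq {n k : ℕ} (f : Fin n → Fin k) (u : Fin n) :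
    sideBalance f u = ((colorClass f (f u)).card : ℤ) - 1
      - 2 * ((colorClass f (f u)).filter (· < u)).card := by
  have h1 : ∀ v, (if f u = f v then Int.sign ((v : ℤ) - u) else 0)
      = (if f v = f u then 1 else 0) - (if v = u then 1 else 0)
        - 2 * (if f v = f u ∧ v < u then 1 else 0) := by
    intro v
    by_cases hf : f v = f u
    · rw [if_pos hf.symm, if_pos hf]
      rcases lt_trichotomy v u with h | h | h
      · rw [Int.sign_eq_neg_one_of_neg (by simpa using h), if_neg h.ne, if_pos ⟨hf, h⟩]; rfl
      · simp [h]
      · rw [Int.sign_eq_one_of_pos (by simpa using h), if_neg h.ne',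
          if_neg fun h' => h'.2.not_gt h]; rfl
    · rw [if_neg (Ne.symm hf), if_neg hf, if_neg (fun h => hf (congrArg f h)),
        if_neg (fun h => hf h.1)]; rfl
  rw [sideBalance, Finset.sum_congr rfl fun v _ => h1 v, Finset.sum_sub_distrib,
    Finset.sum_sub_distrib, ← Finset.mul_sum, Finset.sum_ite_eq', if_pos (Finset.mem_univ u),
    Finset.sum_boole, Finset.sum_boole, colorClass, Finset.filter_filter]

theorem IsWeakMaximizer.antitone_sideBalance {n k : ℕ} {f : Fin n → Fin k}
    (hf : IsWeakMaximizer (pathGraph n) f) : Antitone (sideBalance f) := by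
  have hstep : ∀ p q : Fin n, (q : ℕ) = p + 1 → sideBalance f q ≤ sideBalance f p := by
    intro p q hpq
    by_cases hc : f p = f q
    · rw [sideBalance_eq, sideBalance_eq, hc]
      have : ((colorClass f (f q)).filter (· < p)).card
          ≤ ((colorClass f (f q)).filter (· < q)).card := by
        refine Finset.card_le_card fun v hv => ?_
        simp only [Finset.mem_filter, Fin.lt_def] at hv ⊢
        exact ⟨hv.1, by omega⟩
      omega
    · have h1 := hf.2 (swapColors f p q) (hf.1.comp (Equiv.surjective _))
        (colorType_comp_equiv f _)
      have h2 := wienerColoring_swapColors f hpq hc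
      zify at h1
      linarith
  have hall : ∀ (d : ℕ) (p q : Fin n), (q : ℕ) = p + d → sideBalance f q ≤ sideBalance f p := by
    intro d
    induction d with
    | zero =>
      intro p q h
      rw [Fin.ext h]
    | succ d ih =>
      intro p q h
      have hq := q.isLt
      exact (hstep ⟨p + d, by omega⟩ q h).trans (ih p _ rfl)
  intro p q h
  exact hall (q - p) p q (by rw [Fin.le_def] at h; omega)

/-- The ranks of the elements of `A` run through `0, …, |A| - 1`. -/
theorem sum_rank {α M : Type*} [LinearOrder α] [AddCommMonoid M] (A : Finset α) (F : ℕ → M) :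
    ∑ u ∈ A, F (A.filter (· < u)).card = ∑ l ∈ Finset.range A.card, F l := by
  induction A using Finset.induction_on_max with
  | empty => simp
  | insert a s ha ih =>
    have has : a ∉ s := fun h => lt_irrefl _ (ha a h)
    rw [Finset.sum_insert has, Finset.card_insert_of_notMem has, Finset.sum_range_succ, ← ih,
      add_comm]
    congr 1
    · refine Finset.sum_congr rfl fun u hu => ?_
      rw [Finset.filter_insert, if_neg (ha u hu).not_gt]
    · rw [Finset.filter_insert, if_neg (lt_irrefl a), Finset.filter_true_of_mem ha]

theorem card_range_filter_two_mul (a m : ℕ) :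
    ((Finset.range a).filter (fun l => 2 * l + 1 < m)).card = min a (m / 2) := by
  rw [← Finset.card_range (min a (m / 2))]
  congr 1
  ext l
  simp only [Finset.mem_filter, Finset.mem_range]
  omega

theorem card_filter_sideBalance {n k : ℕ} (f : Fin n → Fin k) (c : ℤ) (G : ℕ → ℕ)
    (hG : ∀ a : ℕ, ((Finset.range a).filter (fun l : ℕ => c < (a : ℤ) - 1 - 2 * l)).card = G a) :
    (Finset.univ.filter (fun u => c < sideBalance f u)).card = ((colorType f).map G).sum := by
  rw [colorType, Multiset.map_map]
  change _ = ∑ i, G (colorClass f i).card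
  rw [Finset.card_filter, ← Finset.sum_fiberwise (s := Finset.univ) (g := f)]
  refine Finset.sum_congr rfl fun i _ => ?_
  rw [← hG, Finset.card_filter, ← sum_rank]
  refine Finset.sum_congr rfl fun u hu => ?_
  have hu' : f u = i := (Finset.mem_filter.1 hu).2
  rw [sideBalance_eq, hu']

theorem sum_colorType {n k : ℕ} (f : Fin n → Fin k) : (colorType f).sum = n := by
  change ∑ i, (Finset.univ.filter (fun v => f v = i)).card = n
  simp only [Finset.card_filter]
  rw [Finset.sum_comm]
  simp

theorem card_filter_lt_sideBalance {n k : ℕ} (f : Fin n → Fin k) (c : ℕ) :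
    (Finset.univ.filter (fun u => (c : ℤ) < sideBalance f u)).card
      = halfExcess (colorType f) c := by
  refine card_filter_sideBalance f c _ fun a => ?_
  have h := card_range_filter_two_mul a (a - c)
  rw [← show min a ((a - c) / 2) = (a - c) / 2 by omega, ← h]
  congr 1
  ext l
  simp only [Finset.mem_filter, Finset.mem_range]
  omega

theorem card_filter_neg_lt_sideBalance {n k : ℕ} (f : Fin n → Fin k) (c : ℕ) :
    (Finset.univ.filter (fun u => -(c : ℤ) - 1 < sideBalance f u)).card
      + halfExcess (colorType f) c = n := by
  rw [card_filter_sideBalance f (-(c : ℤ) - 1) (fun a => a - (a - c) / 2), halfExcess,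
    ← Multiset.sum_map_add]
  · conv_rhs => rw [← sum_colorType f, ← Multiset.map_id (colorType f)]
    congr 1
    refine Multiset.map_congr rfl fun a _ => ?_
    simp only [id]; omega
  · intro a
    have h := card_range_filter_two_mul a (a + c + 1)
    rw [show a - (a - c) / 2 = min a ((a + c + 1) / 2) by omega, ← h]
    congr 1
    ext l
    simp only [Finset.mem_filter, Finset.mem_range]
    omega

theorem abs_sub_eq_sum_Ico {N x y : ℤ} (hx : -N ≤ x) (hx' : x ≤ N) (hy : -N ≤ y) (hy' : y ≤ N) :
    |x - y| = ∑ c ∈ Finset.Ico (-N) N, ((if c < x then 1 else 0) * (if c < y then 0 else 1)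
      + (if c < y then 1 else 0) * (if c < x then 0 else 1)) := by
  wlog h : x ≤ y generalizing x y
  · rw [abs_sub_comm, this hy hy' hx hx' (by omega)]
    exact Finset.sum_congr rfl fun c _ => add_comm _ _
  have h1 : ∀ c : ℤ, ((if c < x then 1 else 0) * (if c < y then 0 else 1)
      + (if c < y then 1 else 0) * (if c < x then 0 else 1) : ℤ)
      = if x ≤ c ∧ c < y then 1 else 0 := by
    intro c
    split_ifs <;> first | rfl | omega
  have h2 : (Finset.Ico (-N) N).filter (fun c => x ≤ c ∧ c < y) = Finset.Ico x y := by
    ext c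
    simp only [Finset.mem_filter, Finset.mem_Ico]
    omega
  rw [Finset.sum_congr rfl fun c _ => h1 c, Finset.sum_boole, h2, Int.card_Ico,
    abs_of_nonpos (by omega)]
  simp; omega

theorem sum_Ico_neg {M : Type*} [AddCommMonoid M] (N : ℕ) (F : ℤ → M) :
    ∑ c ∈ Finset.Ico (-(N : ℤ)) N, F c
      = ∑ c ∈ Finset.range N, (F c + F (-(c : ℤ) - 1)) := by
  induction N with
  | zero => simp
  | succ N ih =>
    rw [Finset.sum_range_succ, ← ih]
    have : Finset.Ico (-((N + 1 : ℕ) : ℤ)) (N + 1 : ℕ)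
        = insert (N : ℤ) (insert (-(N : ℤ) - 1) (Finset.Ico (-(N : ℤ)) N)) := by
      ext c
      simp only [Finset.mem_insert, Finset.mem_Ico]
      omega
    rw [this, Finset.sum_insert (by simp; omega), Finset.sum_insert (by simp)]
    rw [← add_assoc, add_comm]

theorem sum_abs_sideBalance_sub {n k : ℕ} (f : Fin n → Fin k) :
    ∑ u : Fin n, ∑ v : Fin n, |sideBalance f u - sideBalance f v|
      = 4 * typeValue (colorType f) := by
  have hb : ∀ u, -(n : ℤ) ≤ sideBalance f u ∧ sideBalance f u ≤ n := by
    intro u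
    have h1 : (colorClass f (f u)).card ≤ n := (Finset.card_le_univ _).trans_eq (by simp)
    have h2 : ((colorClass f (f u)).filter (· < u)).card < (colorClass f (f u)).card :=
      Finset.card_lt_card (Finset.filter_ssubset.2 ⟨u, by simp [colorClass], by simp⟩)
    rw [sideBalance_eq]
    omega
  have h1 : ∀ u v, |sideBalance f u - sideBalance f v| = _ := fun u v =>
    abs_sub_eq_sum_Ico (hb u).1 (hb u).2 (hb v).1 (hb v).2
  have h0 : ∀ c : ℤ, ∑ u, (if c < sideBalance f u then 1 else 0 : ℤ)
      = (Finset.univ.filter (fun u => c < sideBalance f u)).card := by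
    intro c; rw [Finset.sum_boole]
  have h0' : ∀ c : ℤ, ∑ u, (if c < sideBalance f u then 0 else 1 : ℤ)
      = n - (Finset.univ.filter (fun u => c < sideBalance f u)).card := by
    intro c
    have : ∀ u, (if c < sideBalance f u then 0 else 1 : ℤ)
        = 1 - (if c < sideBalance f u then 1 else 0) := by
      intro u; split_ifs <;> rfl
    rw [Finset.sum_congr rfl fun u _ => this u, Finset.sum_sub_distrib, h0]
    simp
  have h2 : ∑ u : Fin n, ∑ v : Fin n, |sideBalance f u - sideBalance f v|
      = ∑ c ∈ Finset.Ico (-(n : ℤ)) n,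
        2 * (((Finset.univ.filter (fun u => c < sideBalance f u)).card : ℤ)
          * (n - (Finset.univ.filter (fun u => c < sideBalance f u)).card)) := by
    simp only [h1]
    simp only [Finset.sum_comm (t := Finset.Ico (-(n : ℤ)) n)]
    refine Finset.sum_congr rfl fun c _ => ?_
    simp only [Finset.sum_add_distrib, ← Finset.mul_sum, ← Finset.sum_mul, h0, h0']
    ring
  rw [h2, sum_Ico_neg, typeValue, sum_colorType, Finset.mul_sum]
  refine Finset.sum_congr rfl fun c _ => ?_
  have h3 := card_filter_lt_sideBalance f c
  have h4 := card_filter_neg_lt_sideBalance f c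
  rw [h3]
  zify at h4
  rw [eq_sub_of_add_eq h4]
  ring

/-- If `f, f'` are `k`-color weak maximizers of `W` on `P_n`, `type(f) ≺ type(f')` and
`type(f) ≠ type(f')`, then `W(f) < W(f')`. -/
theorem path_majorization_strict (n k : ℕ) (f f' : Fin n → Fin k)
    (hf : IsWeakMaximizer (SimpleGraph.pathGraph n) f)
    (hf' : IsWeakMaximizer (SimpleGraph.pathGraph n) f')
    (hmaj : MajorizedBy (colorType f) (colorType f'))
    (hne : colorType f ≠ colorType f') :
    wienerColoring (SimpleGraph.pathGraph n) f
      < wienerColoring (SimpleGraph.pathGraph n) f' := by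
  have h := hmaj.typeValue_lt hne
  have h1 := four_mul_wienerColoring_le f
  have h2 := four_mul_wienerColoring_eq hf'.antitone_sideBalance
  rw [sum_abs_sideBalance_sub] at h1 h2
  zify
  linarith
end

section
/- Suppose 2 ≤ k ≤ n are integers with n even, and f : V(C_n) → {1,...,k} is a k-color weak maximizer of the Wiener index W on C_n. Then W(f) = min{ W(f') : f' a k-color weak maximizer of W on C_n } if and only if type(f) ∈ R^∞({t(n,k)}). -/
open SimpleGraph Finset

/-! ### Distances in even cycles, counted by diametral cuts -/

lemma sum_zmod_val {n : ℕ} [NeZero n] (φ : ℕ → ℕ) :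
    ∑ v : ZMod n, φ v.val = ∑ a ∈ range n, φ a := by
  cases n with
  | zero => exact absurd rfl (NeZero.ne 0)
  | succ n => exact Fin.sum_univ_eq_sum_range φ _

/-- The number of half-circles `{c, …, c + h - 1}` of `ZMod n` that contain exactly one of
`u` and `v`. -/
def sepCount (h : ℕ) {n : ℕ} [NeZero n] (u v : ZMod n) : ℕ :=
  ∑ c : ZMod n, if ((u - c).val < h ↔ (v - c).val < h) then 0 else 1

lemma cycleGraphZMod_exists_walk {n : ℕ} (hn : 2 ≤ n) (u : ZMod n) (j : ℕ) :
    ∃ p : (cycleGraphZMod n).Walk u (u + j), p.length = j := by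
  induction j with
  | zero => exact ⟨Walk.nil.copy rfl (by simp), by simp⟩
  | succ j ih =>
    obtain ⟨p, hp⟩ := ih
    have : Fact (1 < n) := ⟨hn⟩
    have hadj : (cycleGraphZMod n).Adj (u + j) (u + (j + 1 : ℕ)) := by
      rw [cycleGraphZMod, SimpleGraph.fromRel_adj]
      refine ⟨fun he => ?_, Or.inl (by push_cast; ring)⟩
      have h0 : (1 : ZMod n) = 0 := by
        push_cast at he
        linear_combination -he
      exact one_ne_zero h0
    exact ⟨p.concat hadj, by simp [hp]⟩

section Distance

variable {n h : ℕ} [NeZero n]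

lemma sepCount_comm (u v : ZMod n) : sepCount h u v = sepCount h v u := by
  unfold sepCount
  refine sum_congr rfl fun c _ => ?_
  simp only [iff_comm]

lemma sepCount_triangle (u v w : ZMod n) :
    sepCount h u w ≤ sepCount h u v + sepCount h v w := by
  unfold sepCount
  rw [← sum_add_distrib]
  refine sum_le_sum fun c _ => ?_
  split_ifs <;> omega

lemma sepCount_self (u : ZMod n) : sepCount h u u = 0 := by
  simp [sepCount]

lemma sepCount_eq_of_val_le (hn : n = 2 * h) {u v : ZMod n} (huv : (v - u).val ≤ h) :
    sepCount h u v = 2 * (v - u).val := by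
  set j := (v - u).val with hj
  have h1 : sepCount h u v
      = ∑ a ∈ range n, if (a < h ↔ (a + j) % n < h) then 0 else 1 := by
    rw [← sum_zmod_val fun a => if (a < h ↔ (a + j) % n < h) then 0 else 1]
    unfold sepCount
    refine Fintype.sum_equiv (Equiv.subLeft u) _ _ fun c => ?_
    have : v - c = (u - c) + (v - u) := by ring
    simp only [Equiv.subLeft_apply]
    rw [this, ZMod.val_add]
  rw [h1]
  have h2 : ∀ a ∈ range n, (if (a < h ↔ (a + j) % n < h) then 0 else 1)
      = if (a ∈ Ico (h - j) h ∪ Ico (n - j) n) then 1 else 0 := by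
    intro a ha
    rw [mem_range] at ha
    have hmod : (a + j) % n = if a + j < n then a + j else a + j - n := by
      split_ifs with hlt
      · exact Nat.mod_eq_of_lt hlt
      · rw [Nat.mod_eq_sub_mod (by omega), Nat.mod_eq_of_lt (by omega)]
    rw [hmod]
    simp only [mem_union, mem_Ico]
    split_ifs <;> omega
  rw [sum_congr rfl h2, ← card_filter, filter_mem_eq_inter, inter_eq_right.2, card_union_of_disjoint]
  · simp only [Nat.card_Ico]; omega
  · rw [Finset.disjoint_left]
    intro a
    simp only [mem_Ico]
    omega
  · intro a
    simp only [mem_union, mem_Ico, mem_range]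
    omega

lemma cycleGraphZMod_dist_le (hn : 2 ≤ n) (u v : ZMod n) :
    (cycleGraphZMod n).dist u v ≤ (v - u).val := by
  obtain ⟨p, hp⟩ := cycleGraphZMod_exists_walk hn u (v - u).val
  have hv : u + ((v - u).val : ZMod n) = v := by simp
  have := (cycleGraphZMod n).dist_le (p.copy rfl hv)
  simpa [hp] using this

lemma cycleGraphZMod_reachable (hn : 2 ≤ n) (u v : ZMod n) :
    (cycleGraphZMod n).Reachable u v := by
  obtain ⟨p, -⟩ := cycleGraphZMod_exists_walk hn u (v - u).val
  have hv : u + ((v - u).val : ZMod n) = v := by simp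
  exact ⟨p.copy rfl hv⟩

lemma sepCount_of_adj (hn : n = 2 * h) {u v : ZMod n} (huv : (cycleGraphZMod n).Adj u v) :
    sepCount h u v = 2 := by
  have hpos : n ≠ 0 := NeZero.ne n
  have : Fact (1 < n) := ⟨by omega⟩
  have key : ∀ u : ZMod n, sepCount h u (u + 1) = 2 := by
    intro u
    have hval : (u + 1 - u : ZMod n).val = 1 := by
      rw [add_sub_cancel_left, ZMod.val_one]
    rw [sepCount_eq_of_val_le hn (by omega), hval]
  rw [cycleGraphZMod, SimpleGraph.fromRel_adj] at huv
  rcases huv.2 with rfl | rfl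
  · exact key u
  · rw [sepCount_comm]; exact key v

lemma sepCount_le_length (hn : n = 2 * h) {u v : ZMod n} (p : (cycleGraphZMod n).Walk u v) :
    sepCount h u v ≤ 2 * p.length := by
  induction p with
  | nil => simp [sepCount_self]
  | @cons a b c hadj p ih =>
    have h1 := sepCount_triangle (h := h) a b c
    have h2 := sepCount_of_adj hn hadj
    rw [Walk.length_cons]
    omega

lemma two_mul_dist_eq_sepCount (hn : n = 2 * h) (u v : ZMod n) :
    2 * (cycleGraphZMod n).dist u v = sepCount h u v := by
  have hpos : n ≠ 0 := NeZero.ne n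
  have hn2 : 2 ≤ n := by omega
  apply le_antisymm
  · have key : ∀ u v : ZMod n, (v - u).val ≤ h →
        2 * (cycleGraphZMod n).dist u v ≤ sepCount h u v := by
      intro u v huv
      rw [sepCount_eq_of_val_le hn huv]
      exact Nat.mul_le_mul_left 2 (cycleGraphZMod_dist_le hn2 u v)
    rcases le_or_gt (v - u).val h with hle | hgt
    · exact key u v hle
    · rw [SimpleGraph.dist_comm, sepCount_comm]
      apply key
      have hne : v - u ≠ 0 := by
        intro h0
        rw [h0, ZMod.val_zero] at hgt
        omega
      have : u - v = -(v - u) := by ring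
      have : NeZero (v - u) := ⟨hne⟩
      rw [‹u - v = _›, ZMod.val_neg_of_ne_zero]
      omega
  · obtain ⟨p, hp⟩ := (cycleGraphZMod_reachable hn2 u v).exists_walk_length_eq_dist
    rw [← hp]
    exact sepCount_le_length hn p

end Distance

/-! ### Wiener indices of sets of vertices -/

section WienerSet

variable {n h : ℕ}

/-- Number of elements of `A` in the half-circle starting at `c`. -/
def insideCount (h : ℕ) (A : Finset (ZMod n)) (c : ZMod n) : ℕ :=
  (A.filter fun v => (v - c).val < h).card

/-- Number of elements of `A` outside the half-circle starting at `c`. -/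
def outsideCount (h : ℕ) (A : Finset (ZMod n)) (c : ZMod n) : ℕ :=
  (A.filter fun v => ¬ (v - c).val < h).card

lemma insideCount_add_outsideCount (A : Finset (ZMod n)) (c : ZMod n) :
    insideCount h A c + outsideCount h A c = A.card :=
  card_filter_add_card_filter_not _

lemma sum_separated (A : Finset (ZMod n)) (c : ZMod n) :
    ∑ u ∈ A, ∑ v ∈ A, (if ((u - c).val < h ↔ (v - c).val < h) then 0 else 1)
      = 2 * (insideCount h A c * outsideCount h A c) := by
  have h1 : ∀ u ∈ A, ∑ v ∈ A, (if ((u - c).val < h ↔ (v - c).val < h) then 0 else 1)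
      = (if (u - c).val < h then outsideCount h A c else 0)
        + (if ¬ (u - c).val < h then insideCount h A c else 0) := by
    intro u _
    unfold insideCount outsideCount
    rw [card_filter, card_filter]
    by_cases hu : (u - c).val < h
    · simp only [hu, true_iff, if_true, not_true, if_false, add_zero]
      refine sum_congr rfl fun v _ => ?_
      split_ifs <;> rfl
    · simp only [hu, false_iff, if_false, not_false_iff, if_true, zero_add]
      refine sum_congr rfl fun v _ => ?_
      split_ifs <;> rfl
  rw [sum_congr rfl h1, sum_add_distrib, ← sum_filter, ← sum_filter, sum_const, sum_const,
    smul_eq_mul, smul_eq_mul]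
  change insideCount h A c * outsideCount h A c + outsideCount h A c * insideCount h A c = _
  ring

variable [NeZero n]

lemma sum_offDiag_dist (hn : n = 2 * h) (A : Finset (ZMod n)) :
    ∑ p ∈ A.offDiag, (cycleGraphZMod n).dist p.1 p.2
      = ∑ c : ZMod n, insideCount h A c * outsideCount h A c := by
  have h1 : ∑ p ∈ A.offDiag, (cycleGraphZMod n).dist p.1 p.2
      = ∑ u ∈ A, ∑ v ∈ A, (cycleGraphZMod n).dist u v := by
    rw [← sum_product' (f := fun u v => (cycleGraphZMod n).dist u v),
      ← diag_union_offDiag, sum_union (disjoint_diag_offDiag A)]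
    simp [sum_diag]
  have h2 : 2 * ∑ u ∈ A, ∑ v ∈ A, (cycleGraphZMod n).dist u v
      = 2 * ∑ c : ZMod n, insideCount h A c * outsideCount h A c := by
    simp only [mul_sum, two_mul_dist_eq_sepCount hn]
    unfold sepCount
    simp only [← sum_separated]
    rw [sum_comm]
    simp only [sum_comm (s := A) (t := (univ : Finset (ZMod n)))]
    refine sum_congr rfl fun c _ => ?_
    exact sum_comm
  omega

lemma mul_le_sq_div_four (a b : ℕ) : a * b ≤ (a + b) * (a + b) / 4 := by
  rw [Nat.le_div_iff_mul_le (by norm_num)]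
  nlinarith [four_mul_le_sq_add a b]

lemma mul_eq_sq_div_four {a b : ℕ} (hab : a ≤ b + 1) (hba : b ≤ a + 1) :
    a * b = (a + b) * (a + b) / 4 := by
  obtain rfl | rfl | rfl : a = b ∨ a = b + 1 ∨ b = a + 1 := by omega
  · rw [show (a + a) * (a + a) = 4 * (a * a) by ring]; omega
  · rw [show (b + 1 + b) * (b + 1 + b) = 4 * ((b + 1) * b) + 1 by ring]; omega
  · rw [show (a + (a + 1)) * (a + (a + 1)) = 4 * (a * (a + 1)) + 1 by ring]; omega

lemma wienerSet_le (hn : n = 2 * h) (A : Finset (ZMod n)) :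
    wienerSet (cycleGraphZMod n) A ≤ h * (A.card * A.card / 4) := by
  unfold wienerSet
  rw [sum_offDiag_dist hn]
  have : ∑ c : ZMod n, insideCount h A c * outsideCount h A c
      ≤ ∑ _c : ZMod n, A.card * A.card / 4 := by
    refine sum_le_sum fun c _ => ?_
    rw [← insideCount_add_outsideCount (h := h) A c]
    exact mul_le_sq_div_four _ _
  rw [sum_const, card_univ, ZMod.card, smul_eq_mul] at this
  refine (Nat.div_le_div_right this).trans_eq (Nat.div_eq_of_eq_mul_right two_pos ?_)
  generalize A.card * A.card / 4 = t
  rw [hn, mul_assoc]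

lemma val_add_half (hn : n = 2 * h) (v : ZMod n) :
    (v + (h : ZMod n)).val = if v.val < h then v.val + h else v.val - h := by
  have hv := ZMod.val_lt v
  have hpos : n ≠ 0 := NeZero.ne n
  rw [ZMod.val_add, ZMod.val_natCast, Nat.mod_eq_of_lt (a := h) (by omega)]
  split_ifs with hlt
  · exact Nat.mod_eq_of_lt (by omega)
  · rw [Nat.mod_eq_sub_mod (by omega), Nat.mod_eq_of_lt (by omega)]; omega

lemma val_add_half_lt_iff (hn : n = 2 * h) (v : ZMod n) :
    (v + (h : ZMod n)).val < h ↔ ¬ v.val < h := by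
  have hv := ZMod.val_lt v
  rw [val_add_half hn]
  split_ifs <;> omega

/-- A set in which all but at most one vertex has its antipode attains the maximal
Wiener index. -/
lemma wienerSet_eq_of_antipodal (hn : n = 2 * h) (A : Finset (ZMod n))
    (hA : (A.filter fun v => v + (h : ZMod n) ∉ A).card ≤ 1) :
    wienerSet (cycleGraphZMod n) A = h * (A.card * A.card / 4) := by
  have hhalf : ∀ v c : ZMod n, ((v + (h : ZMod n) - c).val < h ↔ ¬ (v - c).val < h) := by
    intro v c
    rw [← val_add_half_lt_iff hn, add_sub_right_comm]
  have key : ∀ P Q : ZMod n → Prop, ∀ [DecidablePred P] [DecidablePred Q],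
      (∀ v, P v → Q (v + (h : ZMod n))) →
      (A.filter P).card ≤ (A.filter Q).card + 1 := by
    intro P Q _ _ hPQ
    have hsub : A.filter P ⊆ ((A.filter Q).image fun v => v - (h : ZMod n)) ∪
        (A.filter fun v => v + (h : ZMod n) ∉ A) := by
      intro v hv
      rw [mem_filter] at hv
      rw [mem_union, mem_image]
      by_cases hvA : v + (h : ZMod n) ∈ A
      · exact Or.inl ⟨v + h, mem_filter.2 ⟨hvA, hPQ v hv.2⟩, by ring⟩
      · exact Or.inr (mem_filter.2 ⟨hv.1, hvA⟩)
    calc _ ≤ _ := card_le_card hsub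
      _ ≤ _ := card_union_le _ _
      _ ≤ _ := add_le_add card_image_le hA
  unfold wienerSet
  rw [sum_offDiag_dist hn]
  have : ∑ c : ZMod n, insideCount h A c * outsideCount h A c
      = ∑ _c : ZMod n, A.card * A.card / 4 := by
    refine sum_congr rfl fun c _ => ?_
    rw [← insideCount_add_outsideCount (h := h) A c]
    apply mul_eq_sq_div_four
    · exact key _ _ fun v hv => by rw [hhalf]; exact not_not.2 hv
    · exact key _ _ fun v hv => by rw [hhalf]; exact hv
  rw [sum_const, card_univ, ZMod.card, smul_eq_mul] at this
  rw [this]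
  refine Nat.div_eq_of_eq_mul_right two_pos ?_
  generalize A.card * A.card / 4 = t
  rw [hn, mul_assoc]

end WienerSet

/-! ### Colorings attaining the bound -/

lemma sum_range_succ_update {α : Type*} (F G : ℕ → α) (h : ℕ) (p q : α) (φ : α → α → ℕ) :
    ∑ a ∈ range (h + 1), φ (Function.update F h p a) (Function.update G h q a)
      = ∑ a ∈ range h, φ (F a) (G a) + φ p q := by
  rw [sum_range_succ, Function.update_self, Function.update_self]
  congr 1
  refine sum_congr rfl fun a ha => ?_
  have : a ≠ h := (mem_range.1 ha).ne
  rw [Function.update_of_ne this, Function.update_of_ne this]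

/-- The positions of an even cycle can be filled, one antipodal pair `(F a, G a)` at a time, so
that color `i` is used `x i` times and at most one pair contains it exactly once. -/
lemma exists_antipodal_words {k : ℕ} (hk : 0 < k) (h : ℕ) (x : Fin k → ℕ)
    (hx : ∑ i, x i = 2 * h) :
    ∃ F G : ℕ → Fin k, ∀ i,
      (∑ a ∈ range h, ((if F a = i then 1 else 0) + if G a = i then 1 else 0)) = x i ∧
      (∑ a ∈ range h, if (F a = i ↔ G a = i) then 0 else 1) ≤ 1 := by
  induction h generalizing x with
  | zero =>
    refine ⟨fun _ => ⟨0, hk⟩, fun _ => ⟨0, hk⟩, fun i => ?_⟩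
    have := (sum_eq_zero_iff.1 hx) i (mem_univ i)
    simp [this]
  | succ h ih =>
    obtain ⟨p, q, x', hx', hpq⟩ : ∃ (p q : Fin k) (x' : Fin k → ℕ),
        (∀ i, x i = x' i + ((if p = i then 1 else 0) + if q = i then 1 else 0)) ∧
        (p = q ∨ ∀ i, x i ≤ 1) := by
      by_cases hbig : ∃ p, 2 ≤ x p
      · obtain ⟨p, hp⟩ := hbig
        refine ⟨p, p, fun i => x i - if p = i then 2 else 0, fun i => ?_, Or.inl rfl⟩
        by_cases hi : p = i
        · subst hi; simp; omega
        · simp [hi]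
      · push Not at hbig
        have hsmall : ∀ i, x i ≤ 1 := fun i => Nat.le_of_lt_succ (hbig i)
        obtain ⟨p, -, hp⟩ := exists_ne_zero_of_sum_ne_zero
          (show ∑ i, x i ≠ 0 by omega)
        have hrest : ∑ i ∈ univ.erase p, x i ≠ 0 := by
          have h1 := add_sum_erase univ x (mem_univ p)
          have h2 := hsmall p
          omega
        obtain ⟨q, hq, hq0⟩ := exists_ne_zero_of_sum_ne_zero hrest
        have hqp : q ≠ p := ne_of_mem_erase hq
        refine ⟨p, q, fun i => x i - ((if p = i then 1 else 0) + if q = i then 1 else 0),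
          fun i => ?_, Or.inr hsmall⟩
        refine (Nat.sub_add_cancel ?_).symm
        by_cases h1 : p = i
        · subst h1; simp [hqp]; omega
        · by_cases h2 : q = i
          · subst h2; simp [h1]; omega
          · simp [h1, h2]
    have hsum : ∑ i, x' i = 2 * h := by
      have h1 : ∑ i, x i
          = ∑ i, (x' i + ((if p = i then 1 else 0) + if q = i then 1 else 0)) :=
        sum_congr rfl fun i _ => hx' i
      simp only [sum_add_distrib, sum_ite_eq, mem_univ, if_true] at h1
      omega
    obtain ⟨F, G, hFG⟩ := ih x' hsum
    refine ⟨Function.update F h p, Function.update G h q, fun i => ?_⟩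
    have hcount : (∑ a ∈ range (h + 1), ((if Function.update F h p a = i then 1 else 0) +
        if Function.update G h q a = i then 1 else 0)) = x i := by
      rw [sum_range_succ_update F G h p q
        fun r s => (if r = i then 1 else 0) + if s = i then 1 else 0, (hFG i).1, hx' i]
    refine ⟨hcount, ?_⟩
    rcases hpq with rfl | hsmall
    · rw [sum_range_succ_update F G h p p fun r s => if (r = i ↔ s = i) then 0 else 1]
      simpa using (hFG i).2
    · refine le_trans (sum_le_sum fun a _ => ?_) (hcount.trans_le (hsmall i))
      split_ifs <;> omega

/-- The coloring of the even cycle whose antipodal pairs are `(F a, G a)`. -/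
def antipodalColoring {k : ℕ} (n h : ℕ) (F G : ℕ → Fin k) (v : ZMod n) : Fin k :=
  if v.val < h then F v.val else G (v.val - h)

lemma sum_antipodalColoring {n h k : ℕ} [NeZero n] (hn : n = 2 * h) (F G : ℕ → Fin k)
    (φ : Fin k → Fin k → ℕ) :
    ∑ v : ZMod n, φ (antipodalColoring n h F G v) (antipodalColoring n h F G (v + (h : ZMod n)))
      = ∑ a ∈ range h, (φ (F a) (G a) + φ (G a) (F a)) := by
  have h1 : ∀ v : ZMod n,
      φ (antipodalColoring n h F G v) (antipodalColoring n h F G (v + (h : ZMod n)))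
        = (fun a => if a < h then φ (F a) (G a) else φ (G (a - h)) (F (a - h))) v.val := by
    intro v
    have hv := ZMod.val_lt v
    by_cases hlt : v.val < h
    · simp [antipodalColoring, val_add_half hn, hlt]
    · simp [antipodalColoring, val_add_half hn, hlt, show v.val - h < h by omega]
  rw [sum_congr rfl fun v _ => h1 v,
    sum_zmod_val fun a => if a < h then φ (F a) (G a) else φ (G (a - h)) (F (a - h)),
    show range n = range (h + h) by rw [hn, two_mul], sum_range_add, sum_add_distrib]
  congr 1
  · refine sum_congr rfl fun a ha => ?_
    rw [if_pos (mem_range.1 ha)]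
  · refine sum_congr rfl fun a _ => ?_
    simp

/-- Every prescription of class sizes is realised by a coloring of the even cycle all of whose
classes attain the maximal Wiener index. -/
lemma exists_coloring {n h k : ℕ} [NeZero n] (hn : n = 2 * h) (x : Fin k → ℕ)
    (hx : ∑ i, x i = n) :
    ∃ f : ZMod n → Fin k, (∀ i, (colorClass f i).card = x i) ∧
      ∀ i, wienerSet (cycleGraphZMod n) (colorClass f i) = h * (x i * x i / 4) := by
  have hk : 0 < k := by
    rcases Nat.eq_zero_or_pos k with rfl | hk
    · exact absurd (by simpa using hx.symm) (NeZero.ne n)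
    · exact hk
  obtain ⟨F, G, hFG⟩ := exists_antipodal_words hk h x (hx.trans hn)
  have hcard : ∀ i, (colorClass (antipodalColoring n h F G) i).card = x i := by
    intro i
    rw [colorClass, card_filter,
      sum_antipodalColoring hn F G fun r _ => if r = i then 1 else 0, (hFG i).1]
  refine ⟨antipodalColoring n h F G, hcard, fun i => ?_⟩
  rw [← hcard i]
  apply wienerSet_eq_of_antipodal hn
  refine le_trans (le_of_eq ?_) (hFG i).2
  simp only [colorClass, filter_filter, mem_filter, mem_univ, true_and]
  rw [card_filter,
    sum_antipodalColoring hn F G fun r s => if r = i ∧ ¬ s = i then 1 else 0]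
  refine sum_congr rfl fun a _ => ?_
  by_cases h1 : F a = i <;> by_cases h2 : G a = i <;> simp [h1, h2]

/-! ### Minimising the sum of quarter squares -/

lemma mul_le_quarter_sq_add (p x : ℕ) : p * x ≤ x * x / 4 + p * p := by
  obtain ⟨y, rfl | rfl⟩ := Nat.even_or_odd' x
  · rw [show 2 * y * (2 * y) = 4 * (y * y) by ring, Nat.mul_div_cancel_left _ (by norm_num)]
    zify
    nlinarith [sq_nonneg ((y : ℤ) - p)]
  · rw [show (2 * y + 1) * (2 * y + 1) = 1 + 4 * (y * y + y) by ring,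
      Nat.add_mul_div_left _ _ (by norm_num)]
    zify
    norm_num
    rcases le_or_gt (p : ℤ) y with hle | hlt
    · nlinarith
    · nlinarith [mul_nonneg (sub_nonneg.2 hlt.le) (sub_nonneg.2 (Int.add_one_le_of_lt hlt))]

lemma mul_eq_quarter_sq_add_iff (p x : ℕ) :
    p * x = x * x / 4 + p * p ↔ 2 * p ≤ x + 1 ∧ x ≤ 2 * p + 1 := by
  obtain ⟨y, rfl | rfl⟩ := Nat.even_or_odd' x
  · rw [show 2 * y * (2 * y) = 4 * (y * y) by ring, Nat.mul_div_cancel_left _ (by norm_num)]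
    have h1 : p * (2 * y) = y * y + p * p ↔ y = p := by
      zify
      constructor
      · intro h
        have : ((y : ℤ) - p) ^ 2 = 0 := by linear_combination -h
        have := pow_eq_zero_iff (two_ne_zero) |>.1 this
        linarith
      · rintro h; rw [h]; ring
    rw [h1]
    omega
  · rw [show (2 * y + 1) * (2 * y + 1) = 1 + 4 * (y * y + y) by ring,
      Nat.add_mul_div_left _ _ (by norm_num)]
    have h1 : p * (2 * y + 1) = 1 / 4 + (y * y + y) + p * p ↔ y = p ∨ y + 1 = p := by
      zify
      norm_num
      constructor
      · intro h
        have : ((y : ℤ) - p) * (y + 1 - p) = 0 := by linear_combination -h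
        rcases mul_eq_zero.1 this with h | h
        · left; linarith
        · right; linarith
      · rintro (h | h)
        · rw [h]; ring
        · rw [← h]; ring
    rw [h1]
    omega

lemma sum_quarter_sq_ge {k n : ℕ} (p : ℕ) (x : Fin k → ℕ) (hx : ∑ i, x i = n) :
    p * n ≤ ∑ i, x i * x i / 4 + k * (p * p) := by
  have := sum_le_sum fun i (_ : i ∈ univ) => mul_le_quarter_sq_add p (x i)
  rw [← mul_sum, hx, sum_add_distrib, sum_const, card_univ, Fintype.card_fin, smul_eq_mul] at this
  exact this

lemma sum_quarter_sq_eq_iff {k n : ℕ} (p : ℕ) (x : Fin k → ℕ) (hx : ∑ i, x i = n) :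
    p * n = ∑ i, x i * x i / 4 + k * (p * p) ↔ ∀ i, 2 * p ≤ x i + 1 ∧ x i ≤ 2 * p + 1 := by
  have := sum_eq_sum_iff_of_le fun i (_ : i ∈ univ) => mul_le_quarter_sq_add p (x i)
  rw [← mul_sum, hx, sum_add_distrib, sum_const, card_univ, Fintype.card_fin, smul_eq_mul] at this
  rw [this]
  simp [mul_eq_quarter_sq_add_iff]

/-! ### Reverse Robin Hood transfers from the equitable type -/

/-- The multiset with `a` entries `2p - 1`, `b` entries `2p` and `c` entries `2p + 1`. -/
def threeValued (p a b c : ℕ) : Multiset ℕ :=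
  Multiset.replicate a (2 * p - 1) + Multiset.replicate b (2 * p) +
    Multiset.replicate c (2 * p + 1)

lemma eq_threeValued {p : ℕ} (s : Multiset ℕ) (hs : ∀ y ∈ s, 2 * p ≤ y + 1 ∧ y ≤ 2 * p + 1) :
    ∃ a b c, s = threeValued p a b c := by
  induction s using Multiset.induction_on with
  | empty => exact ⟨0, 0, 0, by simp [threeValued]⟩
  | cons y s ih =>
    obtain ⟨a, b, c, rfl⟩ := ih fun z hz => hs z (Multiset.mem_cons_of_mem hz)
    have hy := hs y (Multiset.mem_cons_self _ _)
    obtain rfl | rfl | rfl : y = 2 * p - 1 ∨ y = 2 * p ∨ y = 2 * p + 1 := by omega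
    · exact ⟨a + 1, b, c, by simp [threeValued, Multiset.replicate_succ]⟩
    · exact ⟨a, b + 1, c, by simp [threeValued, Multiset.replicate_succ]⟩
    · exact ⟨a, b, c + 1, by simp [threeValued, Multiset.replicate_succ]⟩

lemma rEStep_threeValued (p a b c : ℕ) :
    REstep (threeValued p a (b + 2) c) (threeValued p (a + 1) b (c + 1)) := by
  refine Or.inr ⟨2 * p, even_two_mul p, ?_, ?_⟩
  · simp only [threeValued, Multiset.count_add, Multiset.count_replicate_self]
    omega
  · have : threeValued p a (b + 2) c
        = threeValued p a b c + Multiset.replicate 2 (2 * p) := by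
      simp only [threeValued, Multiset.replicate_add]
      abel
    rw [this, Multiset.add_sub_cancel_right]
    simp only [threeValued, Multiset.replicate_add, Multiset.replicate_one,
      Multiset.insert_eq_cons, ← Multiset.singleton_add]
    abel

lemma reflTransGen_threeValued (p a b c t : ℕ) :
    Relation.ReflTransGen REstep (threeValued p a (b + 2 * t) c)
      (threeValued p (a + t) b (c + t)) := by
  induction t generalizing a c with
  | zero => exact .refl
  | succ t ih =>
    have h1 := rEStep_threeValued p a (b + 2 * t) c
    have h2 := ih (a + 1) (c + 1)
    rw [show a + (t + 1) = a + 1 + t by ring, show c + (t + 1) = c + 1 + t by ring,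
      show b + 2 * (t + 1) = b + 2 * t + 2 by ring]
    exact h2.head h1

lemma REstep.forall_mem {p : ℕ} {s t : Multiset ℕ} (hst : REstep t s)
    (ht : ∀ y ∈ t, 2 * p ≤ y + 1 ∧ y ≤ 2 * p + 1) :
    ∀ y ∈ s, 2 * p ≤ y + 1 ∧ y ≤ 2 * p + 1 := by
  rcases hst with rfl | ⟨m, hm, hc, rfl⟩
  · exact ht
  · obtain ⟨r, rfl⟩ := hm
    have hmt := ht _ (Multiset.count_pos.1 (by omega : 0 < t.count (r + r)))
    intro y hy
    rw [Multiset.mem_add] at hy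
    rcases hy with hy | hy
    · exact ht y (Multiset.mem_of_le (Multiset.sub_le_self _ _) hy)
    · simp only [Multiset.insert_eq_cons, Multiset.mem_cons, Multiset.mem_singleton] at hy
      omega

/-- Half of the even integer around which the entries of an optimal type concentrate. -/
def centre (n k : ℕ) : ℕ := (n / k + 1) / 2

lemma forall_mem_equitableType (n k : ℕ) :
    ∀ y ∈ equitableType n k, 2 * centre n k ≤ y + 1 ∧ y ≤ 2 * centre n k + 1 := by
  intro y hy
  simp only [equitableType, Multiset.mem_add, Multiset.mem_replicate] at hy
  unfold centre
  omega

lemma threeValued_card (p a b c : ℕ) : (threeValued p a b c).card = a + b + c := by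
  simp [threeValued]

lemma threeValued_sum (p a b c : ℕ) (hp : 1 ≤ p) :
    (threeValued p a b c).sum + a = 2 * p * (threeValued p a b c).card + c := by
  obtain ⟨q, rfl⟩ := Nat.exists_eq_add_of_le' hp
  rw [threeValued_card]
  simp only [threeValued, Multiset.sum_add, Multiset.sum_replicate, smul_eq_mul]
  rw [show 2 * (q + 1) - 1 = 2 * q + 1 by omega]
  ring

lemma equitableType_card {n k : ℕ} (hk : 0 < k) : (equitableType n k).card = k := by
  have := Nat.mod_lt n hk
  simp [equitableType]
  omega

lemma equitableType_sum {n k : ℕ} (hk : 0 < k) : (equitableType n k).sum = n := by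
  have h1 := (Nat.mod_lt n hk).le
  have h2 := Nat.mod_add_div n k
  simp only [equitableType, Multiset.sum_add, Multiset.sum_replicate, smul_eq_mul]
  obtain ⟨d, hd⟩ := Nat.exists_eq_add_of_le h1
  rw [show k - n % k = d by omega]
  calc _ = n % k + (n % k + d) * (n / k) := by ring
    _ = n := by rw [← hd]; exact h2

lemma equitableType_eq_threeValued {n k : ℕ} (hk : 0 < k) (hkn : k ≤ n) :
    ∃ a b c, equitableType n k = threeValued (centre n k) a b c ∧ (a = 0 ∨ c = 0) := by
  have hq : 1 ≤ n / k := (Nat.one_le_div_iff hk).2 hkn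
  rcases Nat.even_or_odd' (n / k) with ⟨p, hp | hp⟩
  · refine ⟨0, k - n % k, n % k, ?_, Or.inl rfl⟩
    have : centre n k = p := by unfold centre; omega
    simp [equitableType, threeValued, this, hp]
  · refine ⟨k - n % k, n % k, 0, ?_, Or.inr rfl⟩
    have : centre n k = p + 1 := by unfold centre; omega
    simp [equitableType, threeValued, this, hp, mul_add]

lemma inRInfty_iff {n k : ℕ} (hk : 0 < k) (hkn : k ≤ n) (s : Multiset ℕ)
    (hcard : s.card = k) (hsum : s.sum = n) :
    InRInfty n k s ↔ ∀ y ∈ s, 2 * centre n k ≤ y + 1 ∧ y ≤ 2 * centre n k + 1 := by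
  constructor
  · intro hs
    clear hcard hsum
    induction hs with
    | refl => exact forall_mem_equitableType n k
    | tail _ hst ih => exact hst.forall_mem ih
  · intro hs
    have hp : 1 ≤ centre n k := by
      have hq : 1 ≤ n / k := (Nat.one_le_div_iff hk).2 hkn
      unfold centre; omega
    obtain ⟨a, b, c, rfl⟩ := eq_threeValued s hs
    obtain ⟨a₀, b₀, c₀, he, h0⟩ := equitableType_eq_threeValued hk hkn
    have hs1 := threeValued_sum (centre n k) a b c hp
    have hs2 := threeValued_sum (centre n k) a₀ b₀ c₀ hp
    rw [← he, equitableType_card hk, equitableType_sum hk] at hs2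
    rw [hcard, hsum] at hs1
    have hc2 := threeValued_card (centre n k) a₀ b₀ c₀
    rw [← he, equitableType_card hk] at hc2
    rw [threeValued_card] at hcard
    unfold InRInfty
    rw [he]
    have := reflTransGen_threeValued (centre n k) a₀ b c₀ (a - a₀)
    rwa [show b + 2 * (a - a₀) = b₀ by omega, show a₀ + (a - a₀) = a by omega,
      show c₀ + (a - a₀) = c by omega] at this

/-! ### Weak maximizers -/

section Coloring

variable {n h k : ℕ} [NeZero n]

lemma sum_card_colorClass (f : ZMod n → Fin k) : ∑ i, (colorClass f i).card = n := by
  have := card_eq_sum_card_fiberwise (s := (univ : Finset (ZMod n))) (f := f)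
    (t := univ) (fun _ _ => mem_coe.2 (mem_univ _))
  rw [card_univ, ZMod.card] at this
  exact this.symm

lemma surjective_iff_card_colorClass_pos (f : ZMod n → Fin k) :
    Function.Surjective f ↔ ∀ i, 0 < (colorClass f i).card := by
  refine forall_congr' fun i => ?_
  simp [card_pos, Finset.Nonempty, colorClass]

lemma wienerColoring_le (hn : n = 2 * h) (f : ZMod n → Fin k) :
    wienerColoring (cycleGraphZMod n) f
      ≤ h * ∑ i, (colorClass f i).card * (colorClass f i).card / 4 := by
  rw [mul_sum]
  exact sum_le_sum fun i _ => wienerSet_le hn _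

lemma sum_quarter_sq_eq_of_colorType_eq {f g : ZMod n → Fin k} (hfg : colorType f = colorType g) :
    ∑ i, (colorClass f i).card * (colorClass f i).card / 4
      = ∑ i, (colorClass g i).card * (colorClass g i).card / 4 := by
  have := congrArg (fun s : Multiset ℕ => (s.map fun y => y * y / 4).sum) hfg
  simp only [colorType, Multiset.map_map] at this
  exact this

/-- Weak maximizers with prescribed positive class sizes exist, with an explicit Wiener index. -/
lemma exists_isWeakMaximizer (hn : n = 2 * h) (x : Fin k → ℕ) (hx : ∑ i, x i = n)
    (hpos : ∀ i, 0 < x i) :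
    ∃ g : ZMod n → Fin k, IsWeakMaximizer (cycleGraphZMod n) g ∧
      (∀ i, (colorClass g i).card = x i) ∧
      wienerColoring (cycleGraphZMod n) g = h * ∑ i, x i * x i / 4 := by
  obtain ⟨g, hcard, hW⟩ := exists_coloring hn x hx
  have hval : wienerColoring (cycleGraphZMod n) g = h * ∑ i, x i * x i / 4 := by
    rw [mul_sum]
    exact sum_congr rfl fun i _ => hW i
  refine ⟨g, ⟨?_, ?_⟩, hcard, hval⟩
  · rw [surjective_iff_card_colorClass_pos]
    intro i
    rw [hcard]
    exact hpos i
  · intro g' _ htype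
    refine (wienerColoring_le hn g').trans_eq ?_
    rw [sum_quarter_sq_eq_of_colorType_eq htype, hval]
    simp only [hcard]

lemma IsWeakMaximizer.wienerColoring_eq (hn : n = 2 * h) {f : ZMod n → Fin k}
    (hf : IsWeakMaximizer (cycleGraphZMod n) f) :
    wienerColoring (cycleGraphZMod n) f
      = h * ∑ i, (colorClass f i).card * (colorClass f i).card / 4 := by
  refine le_antisymm (wienerColoring_le hn f) ?_
  obtain ⟨g, hg, hcard, hW⟩ := exists_isWeakMaximizer hn (fun i => (colorClass f i).card)
    (sum_card_colorClass f) ((surjective_iff_card_colorClass_pos f).1 hf.1)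
  rw [← hW]
  refine hf.2 g hg.1 ?_
  simp only [colorType, hcard]

end Coloring

lemma exists_equitable_sizes {n k : ℕ} (hk : 0 < k) (hkn : k ≤ n) :
    ∃ x : Fin k → ℕ, ∑ i, x i = n ∧ (∀ i, 0 < x i) ∧
      ∀ i, 2 * centre n k ≤ x i + 1 ∧ x i ≤ 2 * centre n k + 1 := by
  have hq : 1 ≤ n / k := (Nat.one_le_div_iff hk).2 hkn
  have hr := Nat.mod_lt n hk
  refine ⟨fun i => n / k + if i.val < n % k then 1 else 0, ?_, fun i => ?_, fun i => ?_⟩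
  · rw [sum_add_distrib, sum_const, card_univ, Fintype.card_fin, smul_eq_mul,
      Fin.sum_univ_eq_sum_range (fun a => if a < n % k then 1 else 0), ← card_filter]
    have : (range k).filter (fun a => a < n % k) = range (n % k) := by
      ext a
      simp only [mem_filter, mem_range]
      omega
    rw [this, card_range]
    exact Nat.div_add_mod n k
  · exact Nat.add_pos_left hq _
  · unfold centre
    dsimp only
    split_ifs <;> omega

/-- For `2 ≤ k ≤ n` with `n` even and `f` a `k`-color weak maximizer of `W` on `C_n`:
`W(f)` is minimal among `k`-color weak maximizers iff `type(f) ∈ R^∞({t(n,k)})`. -/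
theorem cycle_min_even (n k : ℕ) [NeZero n] (hk : 2 ≤ k) (hkn : k ≤ n) (hn : Even n)
    (f : ZMod n → Fin k) (hf : IsWeakMaximizer (cycleGraphZMod n) f) :
    (∀ g : ZMod n → Fin k, IsWeakMaximizer (cycleGraphZMod n) g →
        wienerColoring (cycleGraphZMod n) f ≤ wienerColoring (cycleGraphZMod n) g)
      ↔ InRInfty n k (colorType f) := by
  obtain ⟨h, hh⟩ := hn
  have hn : n = 2 * h := by omega
  have hk0 : 0 < k := by omega
  have hhpos : 0 < h := by omega
  rw [inRInfty_iff hk0 hkn (colorType f) (by simp [colorType]) (sum_card_colorClass f)]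
  have hmem : (∀ y ∈ colorType f, 2 * centre n k ≤ y + 1 ∧ y ≤ 2 * centre n k + 1) ↔
      ∀ i, 2 * centre n k ≤ (colorClass f i).card + 1 ∧
        (colorClass f i).card ≤ 2 * centre n k + 1 := by
    simp [colorType]
  rw [hmem, ← sum_quarter_sq_eq_iff _ _ (sum_card_colorClass f)]
  have hge := sum_quarter_sq_ge (centre n k) _ (sum_card_colorClass f)
  constructor
  · intro hmin
    obtain ⟨x, hx, hpos, hxc⟩ := exists_equitable_sizes hk0 hkn
    obtain ⟨g, hg, -, hW⟩ := exists_isWeakMaximizer hn x hx hpos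
    have hle := hmin g hg
    rw [hf.wienerColoring_eq hn, hW] at hle
    have hle := Nat.le_of_mul_le_mul_left hle hhpos
    have heq := (sum_quarter_sq_eq_iff _ x hx).2 hxc
    omega
  · intro heq g hg
    rw [hf.wienerColoring_eq hn, hg.wienerColoring_eq hn]
    refine Nat.mul_le_mul_left h ?_
    have hge' := sum_quarter_sq_ge (centre n k) _ (sum_card_colorClass g)
    omega
end
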